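/- arXiv:2301.09101 — 2 statements merged into one kernel-verified Lean document; each statement's English description precedes it below -/
import Mathlib

section
/- Let p be a prime and G₁ a special p-group with center of order p² and d(G₁) = d. Then p^{(1/2)d(d-1) − 2} ≤ |M(G₁)| ≤ p^{(1/2)d(d-1) + 3}. -/
/-- The Schur multiplier of a group `G`: the second cohomology group `H²(G, ℂˣ)`
of `G` with coefficients in `ℂˣ` (with trivial `G`-action), as in the paper. -/
noncomputable def schurMultiplier (G : Type) [Group G] : Type :=
  groupCohomology (Rep.trivial ℤ G (Additive ℂˣ)) 2

/-!
For a group `G` of class at most two, restrict a cocycle `f` to its commutator pairing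
`θ(x, z) = f(x, z) - f(z, x)`, where `x ∈ G` and `z ∈ G'`. Up to coboundaries, the cocycles with
trivial pairing are inflated from `G/G'` and, since `ℂˣ` is divisible, are determined by alternating
forms on `G`; those which become coboundaries on `G` come from `Hom(G', ℂˣ)`. Hence
`|M(G)| |G'|` is `p ^ (d (d - 1) / 2)` times the number of pairings that occur.

The Hall-Witt identity forces a Jacobi identity on these pairings. When `|G'| = p ^ 2`, there are
`u`, `w`, `w'` such that `⁅u, w⁆` and `⁅u, w'⁆` generate `G'`. A Jacobi pairing is then determined
by the characters `θ(u, -)` and `θ(w, -)` of `G'` and the `p`-torsion element `θ(w', ⁅u, w'⁆)`, so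
that between `1` and `p ^ 5` pairings occur.
-/

namespace SchurMultiplier

open Subgroup hiding commutator
open scoped commutatorElement IsMulCommutative

section Cochains

/-- The antisymmetrization `f(x, y) - f(y, x)` of a function of two variables. -/
def antisymm (X A : Type*) [AddCommGroup A] : (X → X → A) →+ (X → X → A) where
  toFun f x y := f x y - f y x
  map_zero' := by ext; simp
  map_add' f g := by ext; simp only [Pi.add_apply]; abel

@[simp] lemma antisymm_apply {X A : Type*} [AddCommGroup A] (f : X → X → A) (x y : X) :
    antisymm X A f x y = f x y - f y x := rfl

variable (G A : Type*) [Group G] [AddCommGroup A]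

/-- The group `Z²(G, A)` of 2-cocycles of `G` with values in the trivial `G`-module `A`. -/
def twoCocycles : AddSubgroup (G → G → A) where
  carrier := {f | ∀ x y z, f x y + f (x * y) z = f y z + f x (y * z)}
  zero_mem' := by simp
  add_mem' hf hg x y z := by
    simpa only [Pi.add_apply, add_add_add_comm] using congrArg₂ (· + ·) (hf x y z) (hg x y z)
  neg_mem' hf x y z := by
    simpa only [Pi.neg_apply, neg_add] using congrArg Neg.neg (hf x y z)

/-- The coboundary `(δc)(x, y) = c(x) + c(y) - c(xy)` of a 1-cochain. -/
def coboundary : (G → A) →+ (G → G → A) where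
  toFun c x y := c x + c y - c (x * y)
  map_zero' := by ext; simp
  map_add' c c' := by ext; simp only [Pi.add_apply]; abel

/-- The group `B²(G, A)` of 2-coboundaries. -/
def twoCoboundaries : AddSubgroup (G → G → A) := (coboundary G A).range

variable {G A}

@[simp] lemma coboundary_apply (c : G → A) (x y : G) :
    coboundary G A c x y = c x + c y - c (x * y) := rfl

lemma coboundary_mem_twoCoboundaries (c : G → A) : coboundary G A c ∈ twoCoboundaries G A :=
  ⟨c, rfl⟩

lemma twoCoboundaries_le_twoCocycles : twoCoboundaries G A ≤ twoCocycles G A := by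
  rintro _ ⟨c, rfl⟩ x y z
  simp only [coboundary_apply, mul_assoc]
  abel

lemma twoCocycles_one_left {f : G → G → A} (hf : f ∈ twoCocycles G A) (x : G) :
    f 1 x = f 1 1 := by
  simpa using (hf 1 1 x).symm

lemma twoCocycles_one_right {f : G → G → A} (hf : f ∈ twoCocycles G A) (x : G) :
    f x 1 = f 1 1 := by
  simpa using hf x 1 1

end Cochains

section CentralExtension

variable {G A : Type*} [Group G] [AddCommGroup A]

/-- The central extension of `G` by `A` defined by the 2-cocycle `f`: the set `G × A` with
`(x, a) (y, b) = (xy, a + b + f(x, y))`. -/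
@[ext]
structure CentralExtension (f : twoCocycles G A) where
  base : G
  fiber : A

namespace CentralExtension

variable {f : twoCocycles G A}

instance : Mul (CentralExtension f) :=
  ⟨fun u v => ⟨u.base * v.base, u.fiber + v.fiber + f.1 u.base v.base⟩⟩

-- `f` need not be normalized, whence the component `-f(1, 1)`.
instance : One (CentralExtension f) := ⟨⟨1, -f.1 1 1⟩⟩

instance : Inv (CentralExtension f) :=
  ⟨fun u => ⟨u.base⁻¹, -u.fiber - f.1 u.base⁻¹ u.base - f.1 1 1⟩⟩

@[simp] lemma mul_base (u v : CentralExtension f) : (u * v).base = u.base * v.base := rfl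

@[simp] lemma mul_fiber (u v : CentralExtension f) :
    (u * v).fiber = u.fiber + v.fiber + f.1 u.base v.base := rfl

@[simp] lemma one_base : (1 : CentralExtension f).base = 1 := rfl

@[simp] lemma one_fiber : (1 : CentralExtension f).fiber = -f.1 1 1 := rfl

@[simp] lemma inv_base (u : CentralExtension f) : u⁻¹.base = u.base⁻¹ := rfl

@[simp] lemma inv_fiber (u : CentralExtension f) :
    u⁻¹.fiber = -u.fiber - f.1 u.base⁻¹ u.base - f.1 1 1 := rfl

instance : Group (CentralExtension f) :=
  Group.ofLeftAxioms
    (fun u v w => by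
      have h := f.2 u.base v.base w.base
      ext
      · exact mul_assoc _ _ _
      · simp only [mul_fiber, mul_base]
        linear_combination (norm := abel) h)
    (fun u => by
      ext
      · exact one_mul _
      · simp [twoCocycles_one_left f.2])
    (fun u => by
      ext
      · exact inv_mul_cancel _
      · simp only [mul_fiber, inv_fiber, inv_base, one_fiber]; abel)

/-- The inclusion of the kernel `A` into the extension. -/
@[simps] def incl (f : twoCocycles G A) : Multiplicative A →* CentralExtension f where
  toFun a := ⟨1, a.toAdd - f.1 1 1⟩
  map_one' := by ext <;> simp
  map_mul' _ _ := by
    ext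
    · simp
    · simp only [toAdd_mul, mul_fiber]; abel

/-- The set-theoretic section `x ↦ (x, 0)` of the extension. -/
@[simps] def sec (f : twoCocycles G A) (x : G) : CentralExtension f := ⟨x, 0⟩

lemma incl_injective : Function.Injective (incl f) := fun _ _ h =>
  Multiplicative.toAdd.injective (sub_left_injective (congrArg fiber h))

lemma incl_mem_center (a : Multiplicative A) : incl f a ∈ center (CentralExtension f) := by
  refine mem_center_iff.mpr fun u => ?_
  ext
  · simp
  · simp only [mul_fiber, incl_apply_base, incl_apply_fiber, twoCocycles_one_left f.2,
      twoCocycles_one_right f.2]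
    abel

lemma sec_mul_sec (x y : G) :
    sec f x * sec f y = incl f (.ofAdd (f.1 x y)) * sec f (x * y) := by
  ext
  · simp
  · simp [twoCocycles_one_left f.2]

lemma commutatorElement_eq_incl {u v : CentralExtension f}
    (h : u.base * v.base = v.base * u.base) :
    ⁅u, v⁆ = incl f (.ofAdd (antisymm G A f.1 u.base v.base)) := by
  rw [commutatorElement_def, mul_inv_eq_iff_eq_mul, mul_inv_eq_iff_eq_mul]
  ext
  · simpa only [mul_base, incl_apply_base, one_mul] using h
  · simp only [mul_fiber, mul_base, incl_apply_fiber, incl_apply_base, toAdd_ofAdd, one_mul,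
      twoCocycles_one_left f.2, antisymm_apply]
    abel

lemma mem_center_of_antisymm_eq_zero {u : CentralExtension f} (hu : u.base ∈ center G)
    (h : ∀ x, antisymm G A f.1 x u.base = 0) : u ∈ center (CentralExtension f) := by
  refine mem_center_iff.mpr fun v => commutatorElement_eq_one_iff_mul_comm.mp ?_
  rw [commutatorElement_eq_incl (mem_center_iff.mp hu v.base), h, ofAdd_zero, map_one]

lemma exists_retraction_center [DivisibleBy A ℤ] (f : twoCocycles G A) :
    ∃ r : Additive (center (CentralExtension f)) →+ A,
      ∀ a, r (.ofMul ⟨incl f a, incl_mem_center a⟩) = a.toAdd := by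
  let i : A →+ Additive (center (CentralExtension f)) := MonoidHom.toAdditiveRight
    ((incl f).codRestrict _ incl_mem_center)
  have hi : Function.Injective i := fun _ _ h =>
    Multiplicative.ofAdd.injective (incl_injective (congrArg (fun z => z.toMul.1) h))
  obtain ⟨r, hr⟩ := (Module.Baer.of_divisible A).extension_property_addMonoidHom i hi (.id A)
  exact ⟨r, fun a => DFunLike.congr_fun hr a.toAdd⟩

end CentralExtension

lemma exists_equivariant_extension (N : Subgroup G) (r : Additive N →+ A) :
    ∃ c : G → A, c 1 = 0 ∧ ∀ (n : N) (x : G), c (n * x) = r (.ofMul n) + c x := by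
  obtain ⟨T, hT, h1⟩ := N.exists_isComplement_right 1
  refine ⟨fun x => r (.ofMul (hT.equiv x).1), ?_, fun n x => ?_⟩
  · simp only [hT.equiv_one N.one_mem h1]
    exact map_zero r
  · simp only [hT.equiv_mul_left, ofMul_mul, map_add]

/-- The cocycle is split over `N` by a retraction of the center of its extension onto `A`, which
makes sense because the preimage of `N` is central. -/
theorem exists_coboundary_eq_of_antisymm_eq_zero [DivisibleBy A ℤ] {f : G → G → A}
    (hf : f ∈ twoCocycles G A) {N : Subgroup G} (hN : N ≤ center G)
    (h : ∀ x, ∀ z ∈ N, antisymm G A f x z = 0) :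
    ∃ c : G → A, ∀ z ∈ N, ∀ x, f z x = coboundary G A c z x := by
  lift f to twoCocycles G A using hf
  obtain ⟨r, hr⟩ := CentralExtension.exists_retraction_center f
  obtain ⟨c, hc1, hc⟩ := exists_equivariant_extension _ r
  refine ⟨fun x => c (.sec f x), fun z hz x => ?_⟩
  have hsec : CentralExtension.sec f z ∈ center (CentralExtension f) :=
    CentralExtension.mem_center_of_antisymm_eq_zero (hN hz) fun x => h x z hz
  have h_mul (e) : c (.sec f z * e) = c (.sec f z) + c e := by
    have h1 := hc ⟨_, hsec⟩ 1
    rw [mul_one, hc1, add_zero] at h1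
    rw [hc ⟨_, hsec⟩ e, h1]
  have h_incl := hc ⟨_, CentralExtension.incl_mem_center (.ofAdd (f.1 z x))⟩ (.sec f (z * x))
  rw [hr] at h_incl
  rw [coboundary_apply, ← h_mul, CentralExtension.sec_mul_sec, h_incl, toAdd_ofAdd,
    add_sub_cancel_right]

end CentralExtension

section BiadditiveForms

variable (G A : Type*) [Group G] [AddCommGroup A]

/-- Functions `G × G → A` that are homomorphisms in each variable. -/
def biadditiveForms : AddSubgroup (G → G → A) where
  carrier := {b | (∀ x y z, b (x * y) z = b x z + b y z) ∧ ∀ x y z, b x (y * z) = b x y + b x z}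
  zero_mem' := by simp
  add_mem' hb hb' := by
    constructor <;> intro x y z
    · simp only [Pi.add_apply, hb.1 x y z, hb'.1 x y z]; abel
    · simp only [Pi.add_apply, hb.2 x y z, hb'.2 x y z]; abel
  neg_mem' hb := by
    constructor <;> intro x y z
    · simp only [Pi.neg_apply, hb.1 x y z]; abel
    · simp only [Pi.neg_apply, hb.2 x y z]; abel

/-- Biadditive forms `b` with `b(x, x) = 0`; they factor through the abelianization of `G`. -/
def alternatingForms : AddSubgroup (G → G → A) where
  carrier := {b | b ∈ biadditiveForms G A ∧ ∀ x, b x x = 0}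
  zero_mem' := by simp [zero_mem]
  add_mem' hb hb' := ⟨add_mem hb.1 hb'.1, by simp [hb.2, hb'.2]⟩
  neg_mem' hb := ⟨neg_mem hb.1, by simp [hb.2]⟩

variable {G A}

/-- A biadditive form with its first variable fixed. -/
def biadditiveForms.left (b : biadditiveForms G A) (x : G) : Additive G →+ A :=
  .mk' (fun y => b.1 x y.toMul) fun y z => b.2.2 x y.toMul z.toMul

/-- A biadditive form with its second variable fixed. -/
def biadditiveForms.right (b : biadditiveForms G A) (y : G) : Additive G →+ A :=
  .mk' (fun x => b.1 x.toMul y) fun x z => b.2.1 x.toMul z.toMul y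

lemma biadditiveForms_le_twoCocycles : biadditiveForms G A ≤ twoCocycles G A := fun b hb x y z => by
  rw [hb.1, hb.2]
  abel

lemma map_eq_zero_of_mem_commutator (φ : Additive G →+ A) {z : G} (hz : z ∈ commutator G) :
    φ (.ofMul z) = 0 :=
  Abelianization.commutator_subset_ker (AddMonoidHom.toMultiplicativeRight φ) hz

lemma antisymm_mem_alternatingForms {b : G → G → A} (hb : b ∈ biadditiveForms G A) :
    antisymm G A b ∈ alternatingForms G A := by
  refine ⟨⟨fun x y z => ?_, fun x y z => ?_⟩, fun x => sub_self _⟩ <;>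
    simp only [antisymm_apply, hb.1, hb.2] <;> abel

lemma antisymm_mul_left {f : G → G → A} (hf : f ∈ twoCocycles G A) {x y z : G}
    (hx : x * z = z * x) (hy : y * z = z * y) :
    antisymm G A f (x * y) z = antisymm G A f x z + antisymm G A f y z := by
  have h₁ := hf x y z
  have h₂ := hf x z y
  have h₃ := hf z x y
  simp only [antisymm_apply]
  rw [hy] at h₁
  rw [hx] at h₂
  linear_combination (norm := abel) h₁ - h₂ + h₃

lemma antisymm_mul_right {f : G → G → A} (hf : f ∈ twoCocycles G A) {x y z : G}
    (hy : x * y = y * x) (hz : x * z = z * x) :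
    antisymm G A f x (y * z) = antisymm G A f x y + antisymm G A f x z := by
  have h := antisymm_mul_left hf hy.symm hz.symm
  simp only [antisymm_apply] at h ⊢
  linear_combination (norm := abel) -h

end BiadditiveForms

section RelativeCocycles

variable {G A : Type*} [Group G] [AddCommGroup A]

variable (A) in
/-- The 2-cocycles that vanish as soon as one argument lies in `N`; for normal `N` they are the
cocycles inflated from `G ⧸ N`. -/
def relTwoCocycles (N : Subgroup G) : AddSubgroup (G → G → A) where
  carrier := {f | f ∈ twoCocycles G A ∧ ∀ n ∈ N, ∀ x, f n x = 0 ∧ f x n = 0}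
  zero_mem' := by simp [zero_mem]
  add_mem' hf hg := ⟨add_mem hf.1 hg.1, fun n hn x => by simp [hf.2 n hn x, hg.2 n hn x]⟩
  neg_mem' hf := ⟨neg_mem hf.1, fun n hn x => by simp [hf.2 n hn x]⟩

lemma biadditiveForms_le_relTwoCocycles :
    biadditiveForms G A ≤ relTwoCocycles A (commutator G) := fun b hb =>
  ⟨biadditiveForms_le_twoCocycles hb, fun _ hn x =>
    ⟨map_eq_zero_of_mem_commutator (biadditiveForms.right ⟨b, hb⟩ x) hn,
      map_eq_zero_of_mem_commutator (biadditiveForms.left ⟨b, hb⟩ x) hn⟩⟩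

theorem exists_inflation_eq {N : Subgroup G} [N.Normal] {f : G → G → A}
    (hf : f ∈ relTwoCocycles A N) :
    ∃ g ∈ twoCocycles (G ⧸ N) A, ∀ x y : G, f x y = g x y := by
  have h_left (x y : G) {n : G} (hn : n ∈ N) : f (n * x) y = f x y := by
    simpa [(hf.2 n hn _).1] using hf.1 n x y
  have h_right (x y : G) {n : G} (hn : n ∈ N) : f x (y * n) = f x y := by
    simpa [(hf.2 n hn _).2] using (hf.1 x y n).symm
  have h_eq {x x' y y' : G} (hx : (x : G ⧸ N) = x') (hy : (y : G ⧸ N) = y') :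
      f x y = f x' y' := by
    rw [← h_left x y (Normal.mem_comm ‹_› (QuotientGroup.eq.mp hx)),
      ← h_right _ y (QuotientGroup.eq.mp hy)]
    simp
  have h_out (x y : G) : f x y = f (x : G ⧸ N).out (y : G ⧸ N).out := h_eq (by simp) (by simp)
  refine ⟨fun a b => f a.out b.out, fun a b c => ?_, h_out⟩
  induction a using QuotientGroup.induction_on with | H x => ?_
  induction b using QuotientGroup.induction_on with | H y => ?_
  induction c using QuotientGroup.induction_on with | H z => ?_
  simp only [← QuotientGroup.mk_mul, ← h_out]
  exact hf.1 x y z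

lemma antisymm_mem_alternatingForms_of_mem_relTwoCocycles {f : G → G → A}
    (hf : f ∈ relTwoCocycles A (commutator G)) : antisymm G A f ∈ alternatingForms G A := by
  obtain ⟨g, hg, hfg⟩ := exists_inflation_eq hf
  have h_comm (x y : G) : (x * y : G ⧸ commutator G) = y * x :=
    mul_comm (Abelianization.of x) (Abelianization.of y)
  refine ⟨⟨fun x y z => ?_, fun x y z => ?_⟩, fun x => sub_self _⟩ <;>
    simp only [antisymm_apply, hfg]
  · exact antisymm_mul_left hg (h_comm x z) (h_comm y z)
  · exact antisymm_mul_right hg (h_comm x y) (h_comm x z)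

variable [DivisibleBy A ℤ]

theorem mem_twoCoboundaries_of_antisymm_eq_zero {C : Type*} [CommGroup C] {f : C → C → A}
    (hf : f ∈ twoCocycles C A) (h : antisymm C A f = 0) : f ∈ twoCoboundaries C A := by
  obtain ⟨c, hc⟩ := exists_coboundary_eq_of_antisymm_eq_zero hf
    (CommGroup.center_eq_top (G := C)).ge fun x z _ => congrFun₂ h x z
  exact ⟨c, funext₂ fun x y => (hc x trivial y).symm⟩

lemma mem_twoCoboundaries_of_mem_relTwoCocycles {f : G → G → A}
    (hf : f ∈ relTwoCocycles A (commutator G)) (h : antisymm G A f = 0) :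
    f ∈ twoCoboundaries G A := by
  obtain ⟨g, hg, hfg⟩ := exists_inflation_eq hf
  obtain ⟨c, rfl⟩ : g ∈ twoCoboundaries (Abelianization G) A := by
    refine mem_twoCoboundaries_of_antisymm_eq_zero hg (funext₂ fun a b => ?_)
    induction a using QuotientGroup.induction_on with | H x => ?_
    induction b using QuotientGroup.induction_on with | H y => ?_
    exact (congrArg₂ (· - ·) (hfg x y) (hfg y x)).symm.trans (congrFun₂ h x y)
  exact ⟨c ∘ Abelianization.of, funext₂ fun x y => (hfg x y).symm⟩

theorem exists_sub_coboundary_mem_relTwoCocycles {N : Subgroup G} (hN : N ≤ center G)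
    {f : G → G → A} (hf : f ∈ twoCocycles G A) (h : ∀ x, ∀ z ∈ N, antisymm G A f x z = 0) :
    ∃ c, f - coboundary G A c ∈ relTwoCocycles A N := by
  obtain ⟨c, hc⟩ := exists_coboundary_eq_of_antisymm_eq_zero hf hN h
  have hfc := sub_mem hf (twoCoboundaries_le_twoCocycles (coboundary_mem_twoCoboundaries c))
  refine ⟨c, hfc, fun z hz x => ⟨sub_eq_zero.mpr (hc z hz x), ?_⟩⟩
  have hxz := sub_eq_zero.mp (h x z hz)
  simp only [Pi.sub_apply, hxz, hc z hz x, coboundary_apply, mem_center_iff.mp (hN hz) x]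
  abel

end RelativeCocycles

section CommutatorPairing

variable {G A : Type*} [Group G] [AddCommGroup A]

/-- The commutator `⁅x, y⁆` as an element of the derived subgroup. -/
def commutatorMk (x y : G) : commutator G :=
  ⟨⁅x, y⁆, commutator_mem_commutator (mem_top x) (mem_top y)⟩

/-- The form `(x, y) ↦ χ ⁅x, y⁆` attached to a homomorphism `χ` on the derived subgroup. -/
@[simps!] def commutatorForm : (Additive (commutator G) →+ A) →+ (G → G → A) where
  toFun χ x y := χ (.ofMul (commutatorMk x y))
  map_zero' := rfl
  map_add' _ _ := rfl

variable (G A) in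
/-- The restriction of `f(x, z) - f(z, x)` to `z` in the derived subgroup. On cocycles of a group of
class two it is the component in `Hom(G ⊗ G', A)` of the restriction of `f` to `G × G'`. -/
@[simps!] def commutatorPairing : (G → G → A) →+ (G → commutator G → A) where
  toFun f x z := antisymm G A f x z
  map_zero' := by ext; simp
  map_add' f g := by ext; simp only [map_add, Pi.add_apply]

variable (G) in
lemma closure_range_commutatorMk :
    closure (Set.range fun q : G × G => commutatorMk q.1 q.2) = ⊤ := by
  apply map_injective (commutator G).subtype_injective
  rw [MonoidHom.map_closure, ← MonoidHom.range_eq_map, range_subtype, ← Set.range_comp]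
  convert (commutator_eq_closure G).symm
  ext z
  simp [commutatorMk, mem_commutatorSet_iff]

lemma commutatorForm_injective :
    Function.Injective (commutatorForm : (Additive (commutator G) →+ A) →+ (G → G → A)) :=
  fun _ _ h => AddMonoidHom.toMultiplicativeRight.injective <|
    MonoidHom.eq_of_eqOn_dense (closure_range_commutatorMk G) <|
      Set.forall_mem_range.mpr fun q => congrFun₂ h q.1 q.2

lemma commutatorMk_inv (x y : G) : (commutatorMk x y)⁻¹ = commutatorMk y x :=
  Subtype.ext (commutatorElement_inv x y)

lemma commutatorMk_mul_mul (x y : G) : (commutatorMk x y : G) * (y * x) = x * y := by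
  simp [commutatorMk, commutatorElement_def, mul_assoc]

lemma antisymm_coboundary (c : G → A) (x y : G) :
    antisymm G A (coboundary G A c) x y = c (y * x) - c (x * y) := by
  simp only [antisymm_apply, coboundary_apply]
  abel

lemma antisymm_coboundary_mem_range_commutatorForm {c : G → A}
    (hc : coboundary G A c ∈ biadditiveForms G A) :
    antisymm G A (coboundary G A c) ∈ (commutatorForm : _ →+ (G → G → A)).range := by
  have h_mul {z : G} (hz : z ∈ commutator G) (x : G) : c (z * x) = c z + c x :=
    (sub_eq_zero.mp ((biadditiveForms_le_relTwoCocycles hc).2 z hz x).1).symm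
  refine ⟨-.mk' (fun z => c z.toMul) fun z w => h_mul z.toMul.2 w.toMul, funext₂ fun x y => ?_⟩
  rw [antisymm_coboundary, ← commutatorMk_mul_mul x y, h_mul (commutatorMk x y).2]
  simp

variable (hG : commutator G ≤ center G)
include hG

/-- In a group of class at most two, `y ↦ ⁅x, y⁆` is a homomorphism. -/
def commutatorHom (x : G) : G →* commutator G :=
  .mk' (commutatorMk x) fun y z => Subtype.ext <| by
    have h : y * ⁅x, z⁆ = ⁅x, z⁆ * y :=
      mem_center_iff.mp (hG (commutatorMk x z).2) y
    change ⁅x, y * z⁆ = ⁅x, y⁆ * ⁅x, z⁆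
    rw [commutatorElement_mul_right_eq_mul_conj, mul_assoc _ y, h, mul_assoc, mul_inv_cancel_right]

lemma commutatorMk_mul_right (x y z : G) :
    commutatorMk x (y * z) = commutatorMk x y * commutatorMk x z :=
  map_mul (commutatorHom hG x) y z

lemma commutatorMk_mul_left (x y z : G) :
    commutatorMk (x * y) z = commutatorMk x z * commutatorMk y z := by
  have h : Commute (commutatorMk y z) (commutatorMk x z) :=
    Subtype.ext (mem_center_iff.mp (hG (commutatorMk x z).2) _)
  rw [← h.eq, ← inv_inj, mul_inv_rev]
  simp only [commutatorMk_inv, commutatorMk_mul_right hG]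

lemma commutatorForm_mem_alternatingForms (χ : Additive (commutator G) →+ A) :
    commutatorForm χ ∈ alternatingForms G A := by
  refine ⟨⟨fun x y z => ?_, fun x y z => ?_⟩, fun x => ?_⟩
  · simp [commutatorMk_mul_left hG]
  · simp [commutatorMk_mul_right hG]
  · have h : commutatorMk x x = 1 := Subtype.ext (commutatorElement_self x)
    simp [h]

/-- If `χ` is extended to a cochain `c` on `G` equivariant under `G'`, then `B + δc` is symmetric
and inflated from the abelianization. -/
lemma mem_twoCoboundaries_of_antisymm_eq_commutatorForm [DivisibleBy A ℤ] {B : G → G → A}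
    (hB : B ∈ biadditiveForms G A) {χ : Additive (commutator G) →+ A}
    (h : antisymm G A B = commutatorForm χ) : B ∈ twoCoboundaries G A := by
  obtain ⟨c, hc1, hc⟩ := exists_equivariant_extension _ χ
  have hδ := coboundary_mem_twoCoboundaries c
  have hδ_rel : coboundary G A c ∈ relTwoCocycles A (commutator G) := by
    refine ⟨twoCoboundaries_le_twoCocycles hδ, fun z hz x => ?_⟩
    have hcz : c z = χ (.ofMul ⟨z, hz⟩) := by simpa [hc1] using hc ⟨z, hz⟩ 1
    have hzx : c (z * x) = c z + c x := by rw [hcz, ← hc]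
    constructor
    · rw [coboundary_apply, hzx, sub_self]
    · rw [coboundary_apply, mem_center_iff.mp (hG hz), hzx, add_comm, sub_self]
  have h_symm : antisymm G A (B + coboundary G A c) = 0 := by
    rw [map_add, h]
    ext x y
    rw [Pi.add_apply, Pi.add_apply, antisymm_coboundary, ← commutatorMk_mul_mul x y, hc]
    simp
  have h_mem := mem_twoCoboundaries_of_mem_relTwoCocycles
    (add_mem (biadditiveForms_le_relTwoCocycles hB) hδ_rel) h_symm
  exact (add_mem_cancel_right hδ).mp h_mem

lemma biadditiveForms_inf_twoCoboundaries [DivisibleBy A ℤ] :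
    biadditiveForms G A ⊓ twoCoboundaries G A =
      biadditiveForms G A ⊓ (commutatorForm : _ →+ (G → G → A)).range.comap (antisymm G A) := by
  ext B
  refine and_congr_right fun hB => ⟨?_, ?_⟩
  · rintro ⟨c, rfl⟩
    exact antisymm_coboundary_mem_range_commutatorForm hB
  · rintro ⟨χ, hχ⟩
    exact mem_twoCoboundaries_of_antisymm_eq_commutatorForm hG hB hχ.symm

end CommutatorPairing

section Index

variable {G A : Type*} [Group G] [AddCommGroup A]

variable (G A) in
/-- Pairings `θ : G × G' → A` that are homomorphisms in each variable and satisfy the Jacobi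
identity `θ(x, ⁅y, z⁆) + θ(y, ⁅z, x⁆) + θ(z, ⁅x, y⁆) = 0`. -/
def jacobiPairings : AddSubgroup (G → commutator G → A) where
  carrier := {θ | (∀ x y z, θ (x * y) z = θ x z + θ y z) ∧
    (∀ x z w, θ x (z * w) = θ x z + θ x w) ∧
    ∀ x y z, θ x (commutatorMk y z) + θ y (commutatorMk z x) + θ z (commutatorMk x y) = 0}
  zero_mem' := by simp
  add_mem' {θ ψ} hθ hψ := by
    refine ⟨fun x y z => ?_, fun x z w => ?_, fun x y z => ?_⟩
    · simp only [Pi.add_apply, hθ.1, hψ.1]; abel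
    · simp only [Pi.add_apply, hθ.2.1, hψ.2.1]; abel
    · simp only [Pi.add_apply]
      linear_combination (norm := abel) hθ.2.2 x y z + hψ.2.2 x y z
  neg_mem' {θ} hθ := by
    refine ⟨fun x y z => ?_, fun x z w => ?_, fun x y z => ?_⟩
    · simp only [Pi.neg_apply, hθ.1]; abel
    · simp only [Pi.neg_apply, hθ.2.1]; abel
    · simp only [Pi.neg_apply]
      linear_combination (norm := abel) -hθ.2.2 x y z

variable (hG : commutator G ≤ center G)
include hG

lemma commutatorPairing_mul_left {f : G → G → A} (hf : f ∈ twoCocycles G A) (x y : G)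
    (z : commutator G) :
    commutatorPairing G A f (x * y) z = commutatorPairing G A f x z + commutatorPairing G A f y z :=
  antisymm_mul_left hf (mem_center_iff.mp (hG z.2) x) (mem_center_iff.mp (hG z.2) y)

lemma commutatorPairing_mul_right {f : G → G → A} (hf : f ∈ twoCocycles G A) (x : G)
    (z w : commutator G) :
    commutatorPairing G A f x (z * w) = commutatorPairing G A f x z + commutatorPairing G A f x w :=
  antisymm_mul_right hf (mem_center_iff.mp (hG z.2) x) (mem_center_iff.mp (hG w.2) x)

lemma commutatorPairing_conj {f : G → G → A} (hf : f ∈ twoCocycles G A) (x y : G)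
    (z : commutator G) :
    commutatorPairing G A f (x * y * x⁻¹) z = commutatorPairing G A f y z := by
  have h := commutatorPairing_mul_left hG hf (x * y * x⁻¹) x z
  rw [inv_mul_cancel_right, commutatorPairing_mul_left hG hf, add_comm] at h
  exact (add_right_cancel h).symm

/-- The Hall-Witt identity in the central extension of `G` defined by `f`. -/
lemma commutatorPairing_jacobi {f : G → G → A} (hf : f ∈ twoCocycles G A) (x y z : G) :
    commutatorPairing G A f x (commutatorMk y z) + commutatorPairing G A f y (commutatorMk z x) +
      commutatorPairing G A f z (commutatorMk x y) = 0 := by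
  let σ := CentralExtension.sec ⟨f, hf⟩
  have h_incl (x y z : G) : ⁅σ x * σ y * (σ x)⁻¹, ⁅σ z, σ x⁆⁆ =
      CentralExtension.incl ⟨f, hf⟩ (.ofAdd (commutatorPairing G A f y (commutatorMk z x))) := by
    rw [← commutatorPairing_conj hG hf x y]
    exact CentralExtension.commutatorElement_eq_incl
      (mem_center_iff.mp (hG (commutatorMk z x).2) _)
  have h := commutatorElement_conj_commutatorElement_mul (σ x) (σ y) (σ z)
  rw [h_incl, h_incl, h_incl, ← map_mul, ← map_mul, ← ofAdd_add, ← ofAdd_add,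
    ← map_one (CentralExtension.incl _), CentralExtension.incl_injective.eq_iff, ofAdd_eq_one] at h
  rwa [add_comm (commutatorPairing G A f x _)]

lemma map_commutatorPairing_le_jacobiPairings :
    (twoCocycles G A).map (commutatorPairing G A) ≤ jacobiPairings G A := by
  rintro _ ⟨f, hf, rfl⟩
  exact ⟨commutatorPairing_mul_left hG hf, commutatorPairing_mul_right hG hf,
    commutatorPairing_jacobi hG hf⟩

variable [DivisibleBy A ℤ]

/-- A cocycle with trivial pairing is cohomologous to one inflated from the abelianization, which
is determined up to coboundaries by its antisymmetrization. -/
lemma twoCocycles_inf_ker_commutatorPairing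
    (h_alt : (biadditiveForms G A).map (antisymm G A) = alternatingForms G A) :
    twoCocycles G A ⊓ (commutatorPairing G A).ker = biadditiveForms G A ⊔ twoCoboundaries G A := by
  apply le_antisymm
  · rintro f ⟨hf, hf_ker⟩
    obtain ⟨c, hc⟩ := exists_sub_coboundary_mem_relTwoCocycles hG hf
      fun x z hz => congrFun₂ hf_ker x ⟨z, hz⟩
    obtain ⟨b, hb, hb_eq⟩ := h_alt.ge (antisymm_mem_alternatingForms_of_mem_relTwoCocycles hc)
    have h_sub := mem_twoCoboundaries_of_mem_relTwoCocycles
      (sub_mem hc (biadditiveForms_le_relTwoCocycles hb)) (by rw [map_sub, hb_eq, sub_self])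
    refine AddSubgroup.mem_sup.mpr
      ⟨b, hb, _, add_mem h_sub (coboundary_mem_twoCoboundaries c), by abel⟩
  · refine sup_le (fun b hb => ⟨biadditiveForms_le_twoCocycles hb, funext₂ fun x z => ?_⟩) ?_
    · obtain ⟨h_left, h_right⟩ := (biadditiveForms_le_relTwoCocycles hb).2 z z.2 x
      simp [h_left, h_right]
    · rintro _ ⟨c, rfl⟩
      refine ⟨twoCoboundaries_le_twoCocycles (coboundary_mem_twoCoboundaries c),
        funext₂ fun x z => ?_⟩
      exact (antisymm_coboundary c x z).trans
        (by rw [mem_center_iff.mp (hG z.2) x, sub_self, Pi.zero_apply, Pi.zero_apply])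

lemma relIndex_twoCoboundaries_biadditiveForms_mul_card
    (h_alt : (biadditiveForms G A).map (antisymm G A) = alternatingForms G A) :
    (twoCoboundaries G A).relIndex (biadditiveForms G A) *
        Nat.card (Additive (commutator G) →+ A) =
      Nat.card (alternatingForms G A) := by
  let R := (commutatorForm : (Additive (commutator G) →+ A) →+ (G → G → A)).range
  have hR : R ≤ alternatingForms G A := by
    rintro _ ⟨χ, rfl⟩
    exact commutatorForm_mem_alternatingForms hG χ
  have h_card : Nat.card (Additive (commutator G) →+ A) = Nat.card R :=
    Nat.card_congr (AddMonoidHom.ofInjective commutatorForm_injective).toEquiv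
  rw [← AddSubgroup.inf_relIndex_left, biadditiveForms_inf_twoCoboundaries hG,
    AddSubgroup.inf_relIndex_left, AddSubgroup.relIndex_comap, h_alt, h_card,
    ← AddSubgroup.relIndex_bot_left R, ← AddSubgroup.relIndex_bot_left (alternatingForms G A),
    mul_comm, AddSubgroup.relIndex_mul_relIndex _ _ _ bot_le hR]

/-- The order of `H²(G, A)` for a group of class at most two, from the exact sequence
`0 → Hom(G', A) → Alt(G, A) → H²(G, A) → Hom(G ⊗ G', A)`. -/
theorem relIndex_twoCoboundaries_mul_card
    (h_alt : (biadditiveForms G A).map (antisymm G A) = alternatingForms G A) :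
    (twoCoboundaries G A).relIndex (twoCocycles G A) * Nat.card (Additive (commutator G) →+ A) =
      Nat.card (alternatingForms G A) *
        Nat.card ((twoCocycles G A).map (commutatorPairing G A)) := by
  have h_ker := twoCocycles_inf_ker_commutatorPairing hG h_alt
  rw [← AddSubgroup.relIndex_mul_relIndex (twoCoboundaries G A)
      (biadditiveForms G A ⊔ twoCoboundaries G A) (twoCocycles G A) le_sup_right
      (h_ker.ge.trans inf_le_left),
    AddSubgroup.relIndex_sup_right, mul_right_comm,
    relIndex_twoCoboundaries_biadditiveForms_mul_card hG h_alt, ← h_ker,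
    AddSubgroup.inf_relIndex_left, AddSubgroup.relIndex_ker]

end Index

section JacobiPairings

variable {G A : Type*} [Group G] [AddCommGroup A]

/-- A Jacobi pairing with its first variable fixed, as a function of the pairing. -/
def jacobiPairings.left (x : G) :
    jacobiPairings G A →+ Additive (commutator G) →+ A where
  toFun θ := .mk' (fun z => θ.1 x z.toMul) fun z w => θ.2.2.1 x z.toMul w.toMul
  map_zero' := rfl
  map_add' _ _ := rfl

/-- A Jacobi pairing with its second variable fixed. -/
def jacobiPairings.right (θ : jacobiPairings G A) (z : commutator G) : Additive G →+ A :=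
  .mk' (fun x => θ.1 x.toMul z) fun x y => θ.2.1 x.toMul y.toMul z

lemma map_mem_torsionBy {n : ℕ} (h_pow : ∀ x : G, x ^ n ∈ commutator G) (φ : Additive G →+ A)
    (x : Additive G) : φ x ∈ AddSubgroup.torsionBy A (n : ℤ) := by
  rw [AddSubgroup.torsionBy.nsmul_iff, ← map_nsmul]
  exact map_eq_zero_of_mem_commutator φ (h_pow x.toMul)

lemma addMonoidHom_eq_zero_of_closure_eq_top {H : Type*} [Group H] {s : Set H}
    (hs : closure s = ⊤) {φ : Additive H →+ A} (h : ∀ x ∈ s, φ (.ofMul x) = 0) : φ = 0 :=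
  AddMonoidHom.toMultiplicativeRight.injective (MonoidHom.eq_of_eqOn_dense hs h)

variable {u w w' : G} (h_gen : closure {commutatorMk u w, commutatorMk u w'} = ⊤)
include h_gen

/-- By the Jacobi identity `θ(x, ⁅u, w⁆) = 0` for all `x`; taking `x = w'` gives `θ(w', -) = 0`, and
then the Jacobi identity gives `θ(x, ⁅u, w'⁆) = 0`. -/
lemma jacobiPairings.eq_zero {θ : jacobiPairings G A} (hu : jacobiPairings.left u θ = 0)
    (hw : jacobiPairings.left w θ = 0) (hw' : θ.1 w' (commutatorMk u w') = 0) : θ = 0 := by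
  have hu (z) : θ.1 u z = 0 := DFunLike.congr_fun hu z
  have hw (z) : θ.1 w z = 0 := DFunLike.congr_fun hw z
  have h_uw (x : G) : θ.1 x (commutatorMk u w) = 0 := by
    simpa [hu, hw] using θ.2.2.2 x u w
  have h_ext (x : G) (h : θ.1 x (commutatorMk u w') = 0) : jacobiPairings.left x θ = 0 := by
    refine addMonoidHom_eq_zero_of_closure_eq_top h_gen ?_
    rintro _ (rfl | rfl)
    exacts [h_uw x, h]
  have hw'_zero (z) : θ.1 w' z = 0 := DFunLike.congr_fun (h_ext w' hw') z
  have h_uw' (x : G) : θ.1 x (commutatorMk u w') = 0 := by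
    simpa [hu, hw'_zero] using θ.2.2.2 x u w'
  ext x z
  exact DFunLike.congr_fun (h_ext x (h_uw' x)) z

theorem card_jacobiPairings_le {n : ℕ} (h_pow : ∀ x : G, x ^ n ∈ commutator G)
    [Finite (Additive (commutator G) →+ A)] [Finite (AddSubgroup.torsionBy A (n : ℤ))] :
    Finite (jacobiPairings G A) ∧ Nat.card (jacobiPairings G A) ≤
      Nat.card (Additive (commutator G) →+ A) ^ 2 * Nat.card (AddSubgroup.torsionBy A (n : ℤ)) := by
  let Φ : jacobiPairings G A → ((Additive (commutator G) →+ A) × (Additive (commutator G) →+ A)) ×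
      AddSubgroup.torsionBy A (n : ℤ) := fun θ =>
    ((jacobiPairings.left u θ, jacobiPairings.left w θ), ⟨θ.1 w' (commutatorMk u w'),
      map_mem_torsionBy h_pow (jacobiPairings.right θ _) (.ofMul w')⟩)
  have hΦ : Function.Injective Φ := fun θ ψ h => by
    obtain ⟨⟨hu, hw⟩, hw'⟩ := by simpa only [Φ, Prod.mk.injEq, Subtype.ext_iff] using h
    exact sub_eq_zero.mp (jacobiPairings.eq_zero h_gen (by rw [map_sub, hu, sub_self])
      (by rw [map_sub, hw, sub_self]) (sub_eq_zero.mpr hw'))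
  refine ⟨.of_injective Φ hΦ, (Nat.card_le_card_of_injective Φ hΦ).trans_eq ?_⟩
  rw [Nat.card_prod, Nat.card_prod, sq]

end JacobiPairings

section PrimeSquare

variable {H : Type*} [Group H] {p : ℕ}

lemma card_eq_prime_of_ne_bot_of_ne_top (hp : p.Prime) (hH : Nat.card H = p ^ 2) {K : Subgroup H}
    (h_bot : K ≠ ⊥) (h_top : K ≠ ⊤) : Nat.card K = p := by
  have : Finite H := Nat.finite_of_card_ne_zero (hH ▸ pow_ne_zero 2 hp.ne_zero)
  obtain ⟨k, hk, hK⟩ := (Nat.dvd_prime_pow hp).mp (hH ▸ K.card_subgroup_dvd_card)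
  interval_cases k
  · exact absurd (K.eq_bot_of_card_eq (by simpa using hK)) h_bot
  · simpa using hK
  · exact absurd (K.eq_top_of_card_eq (hK.trans hH.symm)) h_top

lemma eq_of_le_of_ne_bot_of_ne_top (hp : p.Prime) (hH : Nat.card H = p ^ 2) {K L : Subgroup H}
    (h_le : K ≤ L) (h_bot : K ≠ ⊥) (h_top : L ≠ ⊤) : K = L := by
  have : Finite H := Nat.finite_of_card_ne_zero (hH ▸ pow_ne_zero 2 hp.ne_zero)
  refine eq_of_le_of_card_ge h_le (le_of_eq ?_)
  rw [card_eq_prime_of_ne_bot_of_ne_top hp hH h_bot (ne_top_of_le_ne_top h_top h_le),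
    card_eq_prime_of_ne_bot_of_ne_top hp hH (ne_bot_of_le_ne_bot h_bot h_le) h_top]

lemma exists_closure_pair_eq_top (hp : p.Prime) (hH : Nat.card H = p ^ 2) :
    ∃ z w : H, closure {z, w} = ⊤ := by
  have : Finite H := Nat.finite_of_card_ne_zero (hH ▸ pow_ne_zero 2 hp.ne_zero)
  have : Nontrivial H :=
    Finite.one_lt_card_iff_nontrivial.mp (hH ▸ Nat.one_lt_pow two_ne_zero hp.one_lt)
  obtain ⟨z, hz⟩ := exists_ne (1 : H)
  by_cases h_top : zpowers z = ⊤
  · exact ⟨z, z, by rwa [Set.pair_eq_singleton, ← zpowers_eq_closure]⟩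
  obtain ⟨w, hw⟩ := SetLike.exists_not_mem_of_ne_top _ h_top rfl
  refine ⟨z, w, by_contra fun h => hw ?_⟩
  have h_le : zpowers z ≤ closure {z, w} := zpowers_le.mpr (mem_closure_of_mem (by simp))
  rw [eq_of_le_of_ne_bot_of_ne_top hp hH h_le (zpowers_ne_bot.mpr hz) h]
  exact mem_closure_of_mem (by simp)

lemma exists_notMem_notMem_of_ne_top {K L : Subgroup H} (hK : K ≠ ⊤) (hL : L ≠ ⊤) :
    ∃ x, x ∉ K ∧ x ∉ L := by
  obtain ⟨a, ha⟩ := SetLike.exists_not_mem_of_ne_top _ hK rfl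
  obtain ⟨b, hb⟩ := SetLike.exists_not_mem_of_ne_top _ hL rfl
  by_cases haL : a ∈ L
  · by_cases hbK : b ∈ K
    · exact ⟨a * b, by rwa [mul_mem_cancel_right hbK], by rwa [mul_mem_cancel_left haL]⟩
    · exact ⟨b, hbK, hb⟩
  · exact ⟨a, ha, haL⟩

variable {G : Type*} [Group G] (hG : commutator G ≤ center G)

/-- Proper nontrivial subgroups of `G'` are equal as soon as they share a nontrivial element, so if
no `⁅u, G⁆` were all of `G'`, then all nontrivial `⁅x, G⁆` would coincide. -/
theorem exists_range_commutatorHom_eq_top (hp : p.Prime) (hcard : Nat.card (commutator G) = p ^ 2) :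
    ∃ u : G, (commutatorHom hG u).range = ⊤ := by
  by_contra! h_top
  have h_range_eq {x y : G} (hxy : commutatorMk x y ≠ 1) :
      (commutatorHom hG x).range = (commutatorHom hG y).range := by
    have hx : commutatorMk x y ∈ (commutatorHom hG x).range := ⟨y, rfl⟩
    have hy : commutatorMk x y ∈ (commutatorHom hG y).range := by
      rw [← commutatorMk_inv]
      exact inv_mem ⟨x, rfl⟩
    have h_bot : (commutatorHom hG x).range ⊓ (commutatorHom hG y).range ≠ ⊥ :=
      fun h => hxy (by simpa [h] using mem_inf.mpr ⟨hx, hy⟩)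
    rw [← eq_of_le_of_ne_bot_of_ne_top hp hcard inf_le_left h_bot (h_top x),
      eq_of_le_of_ne_bot_of_ne_top hp hcard inf_le_right h_bot (h_top y)]
  have h_ker {x y : G} (hxy : commutatorMk x y ≠ 1) : (commutatorHom hG x).ker ≠ ⊤ :=
    fun h => hxy (h.ge (mem_top y))
  obtain ⟨x, y, hxy⟩ : ∃ x y : G, commutatorMk x y ≠ 1 := by
    by_contra! h
    have h_bot : (⊤ : Subgroup (commutator G)) = ⊥ := by
      rw [← closure_range_commutatorMk, closure_eq_bot_iff]
      rintro _ ⟨q, rfl⟩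
      exact h q.1 q.2
    refine (Nat.one_lt_pow two_ne_zero hp.one_lt).ne' ?_
    rw [← hcard, ← card_top, h_bot, card_bot]
  refine h_top x (top_le_iff.mp ?_)
  rw [← closure_range_commutatorMk, closure_le]
  rintro _ ⟨⟨a, b⟩, rfl⟩
  by_cases hab : commutatorMk a b = 1
  · change commutatorMk a b ∈ _
    exact hab ▸ one_mem _
  obtain ⟨u, hxu, hau⟩ := exists_notMem_notMem_of_ne_top (h_ker hxy) (h_ker hab)
  rw [h_range_eq hxu, ← h_range_eq hau]
  exact ⟨b, rfl⟩

include hG in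
theorem exists_closure_commutatorMk_pair_eq_top (hp : p.Prime)
    (hcard : Nat.card (commutator G) = p ^ 2) :
    ∃ u w w' : G, closure {commutatorMk u w, commutatorMk u w'} = ⊤ := by
  obtain ⟨u, hu⟩ := exists_range_commutatorHom_eq_top hG hp hcard
  obtain ⟨z, z', hz⟩ := exists_closure_pair_eq_top hp hcard
  obtain ⟨w, rfl⟩ := hu.ge (mem_top z)
  obtain ⟨w', rfl⟩ := hu.ge (mem_top z')
  exact ⟨u, w, w', hz⟩

end PrimeSquare

section Generators

lemma toZModSubmodule_closure (p : ℕ) {V : Type*} [AddCommGroup V] [Module (ZMod p) V] (s : Set V) :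
    AddSubgroup.toZModSubmodule p (AddSubgroup.closure s) = Submodule.span (ZMod p) s :=
  le_antisymm
    (show AddSubgroup.closure s ≤ (Submodule.span (ZMod p) s).toAddSubgroup from
      (AddSubgroup.closure_le _).mpr Submodule.subset_span)
    (Submodule.span_le.mpr AddSubgroup.subset_closure)

variable {G : Type*} [Group G] (hG : commutator G ≤ center G)
include hG

lemma eq_top_of_sup_commutator_eq_top {H : Subgroup G} (hH : H ⊔ commutator G = ⊤) : H = ⊤ := by
  suffices commutator G ≤ H by rwa [sup_eq_left.mpr this] at hH
  have h_right (x : G) {c : G} (hc : c ∈ commutator G) : commutatorMk x c = 1 :=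
    Subtype.ext (commutatorElement_eq_one_iff_mul_comm.mpr (mem_center_iff.mp (hG hc) x))
  have h_left (x : G) {c : G} (hc : c ∈ commutator G) : commutatorMk c x = 1 := by
    rw [← commutatorMk_inv, h_right x hc, inv_one]
  rw [commutator_eq_closure, closure_le]
  rintro _ ⟨x, y, rfl⟩
  obtain ⟨h, hh, c, hc, rfl⟩ := mem_sup_of_normal_right.mp (hH.ge (mem_top x))
  obtain ⟨h', hh', c', hc', rfl⟩ := mem_sup_of_normal_right.mp (hH.ge (mem_top y))
  have h_eq : commutatorMk (h * c) (h' * c') = commutatorMk h h' := by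
    rw [commutatorMk_mul_left hG, h_left _ hc, commutatorMk_mul_right hG, h_right _ hc', mul_one,
      mul_one]
  change (commutatorMk (h * c) (h' * c') : G) ∈ H
  rw [h_eq]
  exact H.mul_mem (H.mul_mem (H.mul_mem hh hh') (H.inv_mem hh)) (H.inv_mem hh')

variable {p : ℕ} [Module (ZMod p) (Additive (Abelianization G))]

variable (p) in
lemma closure_eq_top_iff_span_eq_top {s : Set G} : closure s = ⊤ ↔
    Submodule.span (ZMod p) ((fun x => Additive.ofMul (Abelianization.of x)) '' s) = ⊤ := by
  have h_map : closure s = ⊤ ↔ closure (Abelianization.of '' s) = ⊤ := by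
    rw [← MonoidHom.map_closure,
      ← map_top_of_surjective (Abelianization.of (G := G)) QuotientGroup.mk_surjective,
      map_eq_map_iff, Abelianization.ker_of, top_sup_eq]
    exact ⟨fun h => by rw [h, top_sup_eq], eq_top_of_sup_commutator_eq_top hG⟩
  rw [h_map, ← toZModSubmodule_closure, map_eq_top_iff, ← map_eq_top_iff toAddSubgroup,
    toAddSubgroup_closure]
  rfl

lemma closure_range_eq_top_of_basis {ι : Type*}
    (b : Module.Basis ι (ZMod p) (Additive (Abelianization G))) {e : ι → G}
    (he : ∀ i, .ofMul (.of (e i)) = b i) : closure (Set.range e) = ⊤ := by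
  rw [closure_eq_top_iff_span_eq_top hG p, ← Set.range_comp, ← b.span_eq]
  exact congrArg (fun v => Submodule.span (ZMod p) (Set.range v)) (funext he)

variable [Group.FG G]

omit hG in
variable (p) in
lemma moduleFinite_abelianization : Module.Finite (ZMod p) (Additive (Abelianization G)) := by
  have : Group.FG (Abelianization G) := QuotientGroup.fg _
  have : Module.Finite ℤ (Additive (Abelianization G)) :=
    Module.Finite.iff_addGroup_fg.mpr inferInstance
  exact Module.Finite.of_restrictScalars_finite ℤ _ _

lemma finrank_abelianization_eq_rank [Fact p.Prime] :
    Module.finrank (ZMod p) (Additive (Abelianization G)) = Group.rank G := by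
  classical
  let π (x : G) : Additive (Abelianization G) := .ofMul (.of x)
  have hπ : Function.Surjective π := QuotientGroup.mk_surjective
  have := moduleFinite_abelianization (G := G) p
  apply le_antisymm
  · obtain ⟨s, hs_card, hs⟩ := Group.rank_spec G
    rw [closure_eq_top_iff_span_eq_top hG p, Set.image_eq_range] at hs
    exact (finrank_le_of_span_eq_top hs).trans_eq (by simpa using hs_card)
  · let b := Module.finBasis (ZMod p) (Additive (Abelianization G))
    have h_gen := closure_range_eq_top_of_basis hG b fun i => Function.surjInv_eq hπ (b i)
    refine (Group.rank_le (S := Finset.univ.image fun i => Function.surjInv hπ (b i)) ?_).trans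
      (Finset.card_image_le.trans_eq (Finset.card_fin _))
    simpa using h_gen

variable (p) in
lemma exists_generators_dual_of_module [Fact p.Prime] :
    ∃ (e : Fin (Group.rank G) → G) (k : Fin (Group.rank G) → Additive G →+ ZMod p),
      closure (Set.range e) = ⊤ ∧ ∀ i j, k i (.ofMul (e j)) = if i = j then 1 else 0 := by
  let π (x : G) : Additive (Abelianization G) := .ofMul (.of x)
  have hπ : Function.Surjective π := QuotientGroup.mk_surjective
  have := moduleFinite_abelianization (G := G) p
  let b := Module.finBasisOfFinrankEq (ZMod p) _ (finrank_abelianization_eq_rank (p := p) hG)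
  choose e he using fun i => hπ (b i)
  refine ⟨e, fun i => (b.coord i).toAddMonoidHom.comp Abelianization.of.toAdditive,
    closure_range_eq_top_of_basis hG b he, fun i j => ?_⟩
  change b.coord i (π (e j)) = _
  rw [he, b.coord_apply, b.repr_self, Finsupp.single_apply]
  simp only [eq_comm]

omit [Module (ZMod p) (Additive (Abelianization G))] in
theorem exists_generators_dual [Fact p.Prime] (h_pow : ∀ x : G, x ^ p ∈ commutator G) :
    ∃ (e : Fin (Group.rank G) → G) (k : Fin (Group.rank G) → Additive G →+ ZMod p),
      closure (Set.range e) = ⊤ ∧ ∀ i j, k i (.ofMul (e j)) = if i = j then 1 else 0 := by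
  have h_smul (v : Additive (Abelianization G)) : p • v = 0 := by
    obtain ⟨x, rfl⟩ := QuotientGroup.mk_surjective v
    exact (QuotientGroup.eq_one_iff (x ^ p)).mpr (h_pow x)
  let := AddCommGroup.zmodModule h_smul
  exact exists_generators_dual_of_module hG p

end Generators

section AlternatingForms

variable {G A : Type*} [Group G] [AddCommGroup A]

lemma alternatingForms_neg_swap {b : G → G → A} (hb : b ∈ alternatingForms G A) (x y : G) :
    b x y = -b y x := by
  have h := hb.2 (x * y)
  rw [hb.1.1, hb.1.2, hb.1.2, hb.2, hb.2, zero_add, add_zero] at h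
  exact eq_neg_of_add_eq_zero_left h

/-- The form `(x, y) ↦ k(x) l(y) a` defined by two characters modulo `n` and an `n`-torsion element
`a`. -/
def biadditiveForms.ofDual {n : ℕ} (a : AddSubgroup.torsionBy A (n : ℤ))
    (k l : Additive G →+ ZMod n) : biadditiveForms G A :=
  ⟨fun x y => ZMod.lift n ⟨zmultiplesHom A a, by simp⟩
      (k (.ofMul x) * l (.ofMul y)),
    fun x y z => by simp only [ofMul_mul, map_add, add_mul],
    fun x y z => by simp only [ofMul_mul, map_add, mul_add]⟩

lemma biadditiveForms.antisymm_ofDual {n : ℕ} (a : AddSubgroup.torsionBy A (n : ℤ))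
    (k l : Additive G →+ ZMod n) (x y : G) :
    antisymm G A (ofDual a k l) x y =
      ZMod.lift n ⟨zmultiplesHom A a, by simp⟩
        (k (.ofMul x) * l (.ofMul y) - k (.ofMul y) * l (.ofMul x)) := by
  rw [map_sub]
  rfl

lemma card_pairs_lt (d : ℕ) : Nat.card {q : Fin d × Fin d // q.2 < q.1} = d * (d - 1) / 2 := by
  rw [Nat.card_congr (Equiv.subtypeProdEquivSigmaSubtype fun i j : Fin d => j < i),
    Nat.card_eq_fintype_card, Fintype.card_sigma, ← Finset.sum_range_id, Finset.sum_range]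
  exact Finset.sum_congr rfl fun i _ => by simp [Fintype.card_subtype, Finset.filter_gt_eq_Iio]

variable {ι : Type*} [LinearOrder ι] {e : ι → G}

lemma alternatingForms_eq_zero {b : G → G → A} (hb : b ∈ alternatingForms G A)
    (he : closure (Set.range e) = ⊤) (h : ∀ i j, j < i → b (e i) (e j) = 0) : b = 0 := by
  have h_e (i j : ι) : b (e i) (e j) = 0 := by
    rcases lt_trichotomy i j with hij | rfl | hij
    · rw [alternatingForms_neg_swap hb, h j i hij, neg_zero]
    · exact hb.2 _
    · exact h i j hij
  have h_left (i : ι) : biadditiveForms.left ⟨b, hb.1⟩ (e i) = 0 :=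
    addMonoidHom_eq_zero_of_closure_eq_top he (Set.forall_mem_range.mpr (h_e i))
  have h_right (y : G) : biadditiveForms.right ⟨b, hb.1⟩ y = 0 :=
    addMonoidHom_eq_zero_of_closure_eq_top he
      (Set.forall_mem_range.mpr fun i => DFunLike.congr_fun (h_left i) (.ofMul y))
  exact funext₂ fun x y => DFunLike.congr_fun (h_right y) (.ofMul x)

variable [Finite ι] {n : ℕ} {k : ι → Additive G →+ ZMod n}

lemma exists_antisymm_apply_eq (hk : ∀ i j, k i (.ofMul (e j)) = if i = j then 1 else 0)
    (a : {q : ι × ι // q.2 < q.1} → AddSubgroup.torsionBy A (n : ℤ)) :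
    ∃ b ∈ biadditiveForms G A, ∀ q, antisymm G A b (e q.1.1) (e q.1.2) = a q := by
  have := Fintype.ofFinite ι
  have h_dual (q r : {q : ι × ι // q.2 < q.1}) :
      k r.1.1 (.ofMul (e q.1.1)) * k r.1.2 (.ofMul (e q.1.2)) -
        k r.1.1 (.ofMul (e q.1.2)) * k r.1.2 (.ofMul (e q.1.1)) = if r = q then 1 else 0 := by
    have h_swap : ¬(r.1.2 = q.1.1 ∧ r.1.1 = q.1.2) := fun h => (h.1 ▸ h.2 ▸ r.2).asymm q.2
    simp only [hk, ← ite_and, mul_ite, mul_one, mul_zero, Subtype.ext_iff, Prod.ext_iff]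
    rw [if_neg h_swap, sub_zero]
    simp only [and_comm]
  refine ⟨(∑ q, biadditiveForms.ofDual (a q) (k q.1.1) (k q.1.2) : biadditiveForms G A),
    SetLike.coe_mem _, fun q => ?_⟩
  rw [AddSubgroup.val_finsetSum, map_sum]
  simp only [Finset.sum_apply, biadditiveForms.antisymm_ofDual, h_dual]
  rw [Finset.sum_eq_single q (fun r _ hr => by rw [if_neg hr, map_zero]) (by simp), if_pos rfl]
  rw [← Int.cast_one, ZMod.lift_coe]
  exact one_zsmul _

variable (he : closure (Set.range e) = ⊤)
  (hk : ∀ i j, k i (.ofMul (e j)) = if i = j then 1 else 0)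
  (h_pow : ∀ x : G, x ^ n ∈ commutator G)
include he hk h_pow

theorem map_antisymm_biadditiveForms :
    (biadditiveForms G A).map (antisymm G A) = alternatingForms G A := by
  refine le_antisymm (AddSubgroup.map_le_iff_le_comap.mpr fun b => antisymm_mem_alternatingForms)
    fun β hβ => ?_
  obtain ⟨b, hb, h_eq⟩ := exists_antisymm_apply_eq hk fun q =>
    ⟨β (e q.1.1) (e q.1.2),
      map_mem_torsionBy h_pow (biadditiveForms.left ⟨β, hβ.1⟩ (e q.1.1)) (.ofMul (e q.1.2))⟩
  refine ⟨b, hb, sub_eq_zero.mp ?_⟩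
  exact alternatingForms_eq_zero (sub_mem (antisymm_mem_alternatingForms hb) hβ) he
    fun i j hij => sub_eq_zero.mpr (h_eq ⟨(i, j), hij⟩)

theorem card_alternatingForms : Nat.card (alternatingForms G A) =
    Nat.card (AddSubgroup.torsionBy A (n : ℤ)) ^ (Nat.card {q : ι × ι // q.2 < q.1}) := by
  let Φ (β : alternatingForms G A) (q : {q : ι × ι // q.2 < q.1}) :
      AddSubgroup.torsionBy A (n : ℤ) := ⟨β.1 (e q.1.1) (e q.1.2),
    map_mem_torsionBy h_pow (biadditiveForms.left ⟨β.1, β.2.1⟩ (e q.1.1)) (.ofMul (e q.1.2))⟩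
  have h_inj : Function.Injective Φ := fun β γ h => by
    refine Subtype.ext (sub_eq_zero.mp (alternatingForms_eq_zero (sub_mem β.2 γ.2) he ?_))
    exact fun i j hij => sub_eq_zero.mpr (congrArg Subtype.val (congrFun h ⟨(i, j), hij⟩))
  have h_surj : Function.Surjective Φ := fun a => by
    obtain ⟨b, hb, h_eq⟩ := exists_antisymm_apply_eq hk a
    exact ⟨⟨_, antisymm_mem_alternatingForms hb⟩, funext fun q => Subtype.ext (h_eq q)⟩
  rw [Nat.card_congr (Equiv.ofBijective Φ ⟨h_inj, h_surj⟩), Nat.card_fun]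

end AlternatingForms

section GroupCohomology

variable {G A : Type} [Group G] [AddCommGroup A]

lemma mem_cocycles₂_trivial_iff {f : G → G → A} :
    Function.uncurry f ∈ groupCohomology.cocycles₂ (Rep.trivial ℤ G A) ↔ f ∈ twoCocycles G A := by
  rw [groupCohomology.mem_cocycles₂_iff]
  exact forall₃_congr fun x y z => by
    rw [add_comm (f x y)]
    rfl

variable (G A) in
/-- The class in Mathlib's `H²(G, A)` of a 2-cocycle. -/
noncomputable def twoCocycleClass :
    twoCocycles G A →+ groupCohomology (Rep.trivial ℤ G A) 2 :=
  (groupCohomology.H2π (Rep.trivial ℤ G A)).hom.toAddMonoidHom.comp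
    (.mk' (fun f => ⟨Function.uncurry f.1, mem_cocycles₂_trivial_iff.mpr f.2⟩) fun _ _ => rfl)

lemma twoCocycleClass_surjective : Function.Surjective (twoCocycleClass G A) := fun c => by
  induction c using groupCohomology.H2_induction_on with
  | h f => exact ⟨⟨Function.curry f.1, mem_cocycles₂_trivial_iff.mp f.2⟩, rfl⟩

lemma ker_twoCocycleClass :
    (twoCocycleClass G A).ker = (twoCoboundaries G A).addSubgroupOf (twoCocycles G A) := by
  ext f
  rw [AddSubgroup.mem_addSubgroupOf, AddMonoidHom.mem_ker]
  refine (groupCohomology.H2π_eq_zero_iff _).trans (exists_congr fun c => ?_)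
  rw [funext_iff, Prod.forall]
  refine Iff.trans (forall₂_congr fun x y => ?_) ⟨funext₂, congrFun₂⟩
  rw [coboundary_apply, add_comm (c x), add_sub_right_comm]
  rfl

theorem card_groupCohomology_two : Nat.card (groupCohomology (Rep.trivial ℤ G A) 2) =
    (twoCoboundaries G A).relIndex (twoCocycles G A) := by
  rw [AddSubgroup.relIndex, ← ker_twoCocycleClass, AddSubgroup.index_ker,
    AddMonoidHom.range_eq_top.mpr twoCocycleClass_surjective, AddSubgroup.card_top]

end GroupCohomology

section Units

noncomputable instance divisibleByUnits (K : Type*) [Field K] [IsAlgClosed K] :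
    DivisibleBy (Additive Kˣ) ℤ :=
  have h_surj {n : ℕ} (hn : n ≠ 0) : Function.Surjective fun x : Additive Kˣ => n • x := fun x => by
    obtain ⟨z, hz⟩ := IsAlgClosed.exists_pow_nat_eq (x.toMul : K) (Nat.pos_of_ne_zero hn)
    have hz_ne : z ≠ 0 := fun h => x.toMul.ne_zero (by rw [← hz, h, zero_pow hn])
    exact ⟨.ofMul (Units.mk0 z hz_ne), Additive.toMul.injective (Units.ext hz)⟩
  let := divisibleByOfSMulRightSurj (Additive Kˣ) ℕ h_surj
  AddGroup.divisibleByIntOfDivisibleByNat _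

lemma card_torsionBy_units (n : ℕ) [NeZero n] :
    Nat.card (AddSubgroup.torsionBy (Additive ℂˣ) (n : ℤ)) = n := by
  refine Eq.trans ?_ (Complex.card_rootsOfUnity n)
  exact Nat.card_congr (Additive.toMul.subtypeEquiv fun _ => AddSubgroup.torsionBy.nsmul_iff)

lemma card_addMonoidHom_units (H : Type*) [CommGroup H] [Finite H] :
    Nat.card (Additive H →+ Additive ℂˣ) = Nat.card H := by
  have : NeZero (Monoid.exponent H) := ⟨Monoid.exponent_ne_zero_of_finite⟩
  rw [← CommGroup.card_monoidHom_of_hasEnoughRootsOfUnity H ℂ]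
  exact Nat.card_congr MonoidHom.toAdditive.symm

end Units

section Bounds

variable {p : ℕ} {G : Type} [Group G] (hG : commutator G ≤ center G)
include hG

lemma isMulCommutative_commutator : IsMulCommutative (commutator G) :=
  ⟨⟨fun x y => Subtype.ext (mem_center_iff.mp (hG y.2) x)⟩⟩

lemma card_addMonoidHom_commutator [Finite (commutator G)] :
    Nat.card (Additive (commutator G) →+ Additive ℂˣ) = Nat.card (commutator G) :=
  have := isMulCommutative_commutator hG
  card_addMonoidHom_units (commutator G)

variable [Fact p.Prime] (h_pow : ∀ x : G, x ^ p ∈ commutator G) [Finite (commutator G)]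
include h_pow

theorem card_schurMultiplier_mul_card_commutator [Group.FG G] :
    Nat.card (schurMultiplier G) * Nat.card (commutator G) =
      p ^ (Group.rank G * (Group.rank G - 1) / 2) *
        Nat.card ((twoCocycles G (Additive ℂˣ)).map (commutatorPairing G (Additive ℂˣ))) := by
  obtain ⟨e, k, he, hk⟩ := exists_generators_dual hG h_pow
  have h := relIndex_twoCoboundaries_mul_card hG
    (map_antisymm_biadditiveForms (A := Additive ℂˣ) he hk h_pow)
  rwa [← card_groupCohomology_two, card_addMonoidHom_commutator hG,
    card_alternatingForms he hk h_pow, card_torsionBy_units, card_pairs_lt] at h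

lemma card_map_commutatorPairing_le {u w w' : G}
    (h_gen : closure {commutatorMk u w, commutatorMk u w'} = ⊤) :
    Finite ((twoCocycles G (Additive ℂˣ)).map (commutatorPairing G (Additive ℂˣ))) ∧
      Nat.card ((twoCocycles G (Additive ℂˣ)).map (commutatorPairing G (Additive ℂˣ))) ≤
        Nat.card (commutator G) ^ 2 * p := by
  have h_char := card_addMonoidHom_commutator hG
  have h_torsion := card_torsionBy_units p
  have : Finite (Additive (commutator G) →+ Additive ℂˣ) :=
    Nat.finite_of_card_ne_zero (h_char.trans_ne Nat.card_pos.ne')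
  have : Finite (AddSubgroup.torsionBy (Additive ℂˣ) (p : ℤ)) :=
    Nat.finite_of_card_ne_zero (h_torsion.trans_ne (NeZero.ne p))
  obtain ⟨_, h_card⟩ := card_jacobiPairings_le (A := Additive ℂˣ) h_gen h_pow
  rw [h_char, h_torsion] at h_card
  have h_le := map_commutatorPairing_le_jacobiPairings (A := Additive ℂˣ) hG
  exact ⟨.of_injective _ (AddSubgroup.inclusion_injective h_le),
    (AddSubgroup.card_le_of_le h_le).trans h_card⟩

omit [Finite (commutator G)] in
theorem card_schurMultiplier_bounds [Group.FG G] (hcard : Nat.card (commutator G) = p ^ 2) :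
    p ^ (Group.rank G * (Group.rank G - 1) / 2) ≤ Nat.card (schurMultiplier G) * p ^ 2 ∧
      Nat.card (schurMultiplier G) ≤ p ^ (Group.rank G * (Group.rank G - 1) / 2 + 3) := by
  have hp : p.Prime := Fact.out
  have h_pos : 0 < p ^ 2 := pow_pos hp.pos 2
  have : Finite (commutator G) := Nat.finite_of_card_ne_zero (hcard.trans_ne h_pos.ne')
  obtain ⟨u, w, w', h_gen⟩ := exists_closure_commutatorMk_pair_eq_top hG hp hcard
  obtain ⟨_, h_le⟩ := card_map_commutatorPairing_le hG h_pow h_gen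
  have h_card := card_schurMultiplier_mul_card_commutator hG h_pow
  rw [hcard] at h_card h_le
  refine ⟨h_card ▸ Nat.le_mul_of_pos_right _ Nat.card_pos, Nat.le_of_mul_le_mul_right ?_ h_pos⟩
  calc Nat.card (schurMultiplier G) * p ^ 2
      ≤ p ^ (Group.rank G * (Group.rank G - 1) / 2) * ((p ^ 2) ^ 2 * p) := by rw [h_card]; gcongr
    _ = p ^ (Group.rank G * (Group.rank G - 1) / 2 + 3) * p ^ 2 := by ring

end Bounds

lemma cast_mul_pred_div_two (d : ℕ) :
    ((d * (d - 1) / 2 : ℕ) : ℝ) = (d : ℝ) * ((d : ℝ) - 1) / 2 := by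
  rw [Nat.cast_div (Nat.even_mul_pred_self d).two_dvd (by norm_num), Nat.cast_mul]
  rcases d with _ | d <;> simp

section Frattini

variable {G : Type*} [Group G] {p : ℕ}

lemma index_eq_of_isCoatom [Finite G] [Fact p.Prime] (hG : IsPGroup p G) {M : Subgroup G}
    (hM : IsCoatom M) : M.index = p := by
  obtain ⟨n, hn⟩ := IsPGroup.iff_card.mp (hG.to_subgroup M)
  obtain ⟨m, hm⟩ := hG.index M
  have hp : 1 < p := (Fact.out : p.Prime).one_lt
  have hm_ne : m ≠ 0 := fun h => hM.1 (index_eq_one.mp (by rw [hm, h, pow_zero]))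
  obtain ⟨K, hK, h_le⟩ := Sylow.exists_subgroup_card_pow_succ
    (by
      rw [← M.card_mul_index, hn, hm, ← pow_add]
      exact pow_dvd_pow p (by omega)) hn
  have h_lt : M < K := h_le.lt_of_ne fun h => by
    rw [h, hK] at hn
    simpa using Nat.pow_right_injective hp hn
  have h_card := M.card_mul_index
  rw [hn, ← card_top (G := G), ← hM.2 K h_lt, hK, pow_succ] at h_card
  exact Nat.eq_of_mul_eq_mul_left (by positivity) h_card

lemma pow_mem_frattini [Finite G] [Fact p.Prime] [Group.IsNilpotent G] (hG : IsPGroup p G) (x : G) :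
    x ^ p ∈ frattini G := by
  simp_rw [frattini, Order.radical, mem_iInf]
  intro M hM
  have : M.Normal :=
    NormalizerCondition.normal_of_coatom M Group.normalizerCondition_of_isNilpotent hM
  exact index_eq_of_isCoatom hG hM ▸ M.pow_index_mem x

end Frattini

end SchurMultiplier

theorem schur_multiplier_bounds_special_center_p_sq_general (p d : ℕ) (hp : p.Prime)
    (G : Type) [Group G] [Group.FG G]
    (hG : commutator G ≤ Subgroup.center G)
    (h_pow : ∀ x : G, x ^ p ∈ commutator G)
    (hcard : Nat.card (commutator G) = p ^ 2)
    (hd : Group.rank G = d) :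
    (p : ℝ) ^ ((d : ℝ) * ((d : ℝ) - 1) / 2 - 2) ≤ (Nat.card (schurMultiplier G) : ℝ) ∧
    (Nat.card (schurMultiplier G) : ℝ) ≤ (p : ℝ) ^ ((d : ℝ) * ((d : ℝ) - 1) / 2 + 3) := by
  have : Fact p.Prime := ⟨hp⟩
  subst hd
  obtain ⟨h_lower, h_upper⟩ := SchurMultiplier.card_schurMultiplier_bounds hG h_pow hcard
  have hp_pos : (0 : ℝ) < p := Nat.cast_pos.mpr hp.pos
  rw [← SchurMultiplier.cast_mul_pred_div_two]
  constructor
  · rw [Real.rpow_sub hp_pos, Real.rpow_natCast, Real.rpow_ofNat, div_le_iff₀ (by positivity)]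
    exact_mod_cast h_lower
  · exact_mod_cast h_upper

/-- Corollary 2 for special `p`-groups with center of order `p ^ 2`:
`p ^ (d * (d - 1) / 2 - 2) ≤ |M(G₁)| ≤ p ^ (d * (d - 1) / 2 + 3)`.
A special `p`-group is a finite `p`-group of nilpotency class 2 whose center
coincides with its derived subgroup and with its Frattini subgroup. -/
theorem schur_multiplier_bounds_special_center_p_sq (p d : ℕ) (hp : p.Prime)
    (G : Type) [Group G] [Finite G] [Group.IsNilpotent G]
    (hpG : IsPGroup p G)
    (hc : Group.nilpotencyClass G = 2)
    (hzc : Subgroup.center G = commutator G)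
    (hzf : Subgroup.center G = frattini G)
    (hz : Nat.card (Subgroup.center G) = p ^ 2)
    (hd : Group.rank G = d) :
    (p : ℝ) ^ ((d : ℝ) * ((d : ℝ) - 1) / 2 - 2) ≤ (Nat.card (schurMultiplier G) : ℝ) ∧
    (Nat.card (schurMultiplier G) : ℝ) ≤ (p : ℝ) ^ ((d : ℝ) * ((d : ℝ) - 1) / 2 + 3) := by
  have : Fact p.Prime := ⟨hp⟩
  exact schur_multiplier_bounds_special_center_p_sq_general p d hp G hzc.ge
    (fun x => hzc ▸ hzf ▸ SchurMultiplier.pow_mem_frattini hpG x) (hzc ▸ hz) hd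
end

section
/- Let p be an odd prime and G₂ a special p-group with center of order p³, |G₂| ≥ p^{13}, and d(G₂) = d. Then |M(G₂)| ≤ p^{(1/2)d(d-1) + 2}. -/
set_option maxSynthPendingDepth 3

section Forms

open Module

variable (F V : Type*) [Field F] [AddCommGroup V] [Module F V]

/-- Symmetric bilinear forms on `V`. -/
def symmetricForms : Submodule F (V →ₗ[F] V →ₗ[F] F) where
  carrier := {β | ∀ x y, β x y = β y x}
  zero_mem' _ _ := rfl
  add_mem' hβ hγ x y := congrArg₂ (· + ·) (hβ x y) (hγ x y)
  smul_mem' c _ hβ x y := congrArg (c • ·) (hβ x y)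

/-- Alternating bilinear forms on `V`. -/
def alternatingForms : Submodule F (V →ₗ[F] V →ₗ[F] F) where
  carrier := {β | β.IsAlt}
  zero_mem' _ := rfl
  add_mem' hβ hγ x := by simp [hβ x, hγ x]
  smul_mem' c _ hβ x := by simp [hβ x]

variable {F V}

theorem finrank_le_card_of_injOn {ι : Type*} [Fintype ι] (S : Submodule F V)
    (e : V →ₗ[F] ι → F) (he : ∀ x ∈ S, e x = 0 → x = 0) : finrank F S ≤ Fintype.card ι := by
  have hinj : Function.Injective (e.domRestrict S) :=
    (injective_iff_map_eq_zero _).2 fun x hx => Subtype.ext (he x x.2 hx)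
  exact (LinearMap.finrank_le_finrank_of_injective hinj).trans_eq (finrank_fintype_fun_eq_card F)

/-- Restriction of a bilinear form to the pairs of basis vectors, one order chosen for each pair. -/
noncomputable def gramEntries {ι : Type*} (b : Basis ι F V) :
    (V →ₗ[F] V →ₗ[F] F) →ₗ[F] Sym2 ι → F :=
  LinearMap.pi fun s => LinearMap.applyₗ (b s.out.2) ∘ₗ LinearMap.applyₗ (b s.out.1)

theorem gramEntries_mk {ι : Type*} (b : Basis ι F V) (β : V →ₗ[F] V →ₗ[F] F) (i j : ι) :
    gramEntries b β s(i, j) = β (b i) (b j) ∨ gramEntries b β s(i, j) = β (b j) (b i) := by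
  have hout : s(s(i, j).out.1, s(i, j).out.2) = s(i, j) := Quot.out_eq _
  rcases Sym2.eq_iff.1 hout with ⟨h₁, h₂⟩ | ⟨h₁, h₂⟩
  · left
    simp [gramEntries, h₁, h₂]
  · right
    simp [gramEntries, h₁, h₂]

variable (F V) [FiniteDimensional F V]

theorem finrank_symmetricForms_le :
    finrank F (symmetricForms F V) ≤ (finrank F V + 1).choose 2 := by
  have b := finBasis F V
  have he : ∀ β ∈ symmetricForms F V, gramEntries b β = 0 → β = 0 := by
    intro β hβ h
    refine b.ext fun i => b.ext fun j => ?_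
    rcases gramEntries_mk b β i j with hij | hij
    · exact hij.symm.trans (congrFun h _)
    · exact (hβ _ _).trans (hij.symm.trans (congrFun h _))
  refine (finrank_le_card_of_injOn _ _ he).trans_eq ?_
  rw [Sym2.card, Fintype.card_fin]

theorem finrank_alternatingForms_le :
    finrank F (alternatingForms F V) ≤ (finrank F V).choose 2 := by
  have b := finBasis F V
  let e : (V →ₗ[F] V →ₗ[F] F) →ₗ[F] {s : Sym2 (Fin (finrank F V)) // ¬ s.IsDiag} → F :=
    LinearMap.funLeft F F Subtype.val ∘ₗ gramEntries b
  have he : ∀ β ∈ alternatingForms F V, e β = 0 → β = 0 := by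
    intro β hβ h
    refine b.ext fun i => b.ext fun j => ?_
    obtain rfl | hne := eq_or_ne i j
    · exact hβ _
    have hs : gramEntries b β s(i, j) = 0 := congrFun h ⟨s(i, j), hne⟩
    rcases gramEntries_mk b β i j with hij | hij
    · exact hij.symm.trans hs
    · rw [← LinearMap.IsAlt.neg hβ, ← hij, hs, neg_zero]; rfl
  refine (finrank_le_card_of_injOn _ _ he).trans_eq ?_
  rw [Sym2.card_subtype_not_diag, Fintype.card_fin]

end Forms

section JacobiPairings

open Module

variable {F V W : Type*} [Field F] [AddCommGroup V] [Module F V] [AddCommGroup W] [Module F W]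

/-- Pairings `φ` of `V` with `W` such that `(x, y, z) ↦ φ x (B y z)` satisfies the Jacobi
identity. They are encoded as linear maps into the dual of `W`. -/
def jacobiPairings (B : V →ₗ[F] V →ₗ[F] W) : Submodule F (V →ₗ[F] Dual F W) where
  carrier := {φ | ∀ x y z, φ x (B y z) + φ y (B z x) + φ z (B x y) = 0}
  zero_mem' := by simp
  add_mem' {φ ψ} hφ hψ x y z := by
    simp only [LinearMap.add_apply]
    linear_combination hφ x y z + hψ x y z
  smul_mem' c φ hφ x y z := by
    simp only [LinearMap.smul_apply, smul_eq_mul]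
    linear_combination c * hφ x y z

/-- The radical of the bilinear map that `B` induces with values in `W ⧸ S`. -/
def radicalModulo (B : V →ₗ[F] V →ₗ[F] W) (S : Submodule F W) : Submodule F V :=
  LinearMap.ker (B.compr₂ S.mkQ)

variable {B : V →ₗ[F] V →ₗ[F] W} {φ ψ χ : V →ₗ[F] Dual F W}

theorem mem_radicalModulo {S : Submodule F W} {x : V} :
    x ∈ radicalModulo B S ↔ ∀ y, B x y ∈ S := by
  simp [radicalModulo, LinearMap.ext_iff]

theorem radicalModulo_inf (S T : Submodule F W) :
    radicalModulo B (S ⊓ T) = radicalModulo B S ⊓ radicalModulo B T := by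
  ext x
  simp [mem_radicalModulo, forall_and]

theorem finrank_range_add_finrank_ker_flip [FiniteDimensional F W] (φ : V →ₗ[F] Dual F W) :
    finrank F (LinearMap.range φ) + finrank F (LinearMap.ker φ.flip) = finrank F W := by
  have h : LinearMap.ker φ.flip = (LinearMap.range φ).dualCoannihilator := by
    ext w
    simp [LinearMap.ext_iff]
  rw [h, Subspace.finrank_add_finrank_dualCoannihilator_eq]

theorem finrank_le_finrank_ker_add_of_symmetric {X U U' : Type*} [AddCommGroup X] [Module F X]
    [FiniteDimensional F X] [AddCommGroup U] [Module F U] [FiniteDimensional F U]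
    [AddCommGroup U'] [Module F U'] (T : X →ₗ[F] U →ₗ[F] U →ₗ[F] F)
    (hT : ∀ x, T x ∈ symmetricForms F U) (L : U →ₗ[F] U') (hL : ∀ x u, L u = 0 → T x u = 0) :
    finrank F X ≤
      finrank F (LinearMap.ker T) + (finrank F (LinearMap.range L) + 1).choose 2 := by
  obtain ⟨σ, hσ⟩ := L.rangeRestrict.exists_rightInverse_of_surjective L.range_rangeRestrict
  have hL_section (u : U) : L (σ (L.rangeRestrict u) - u) = 0 := by
    rw [map_sub, sub_eq_zero]
    exact congrArg Subtype.val (LinearMap.congr_fun hσ (L.rangeRestrict u))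
  have h_section (x : X) (u : U) : T x (σ (L.rangeRestrict u)) = T x u := by
    rw [← sub_eq_zero, ← map_sub, hL x _ (hL_section u)]
  let T' : X →ₗ[F] symmetricForms F (LinearMap.range L) :=
    { toFun := fun x => ⟨(T x).compl₁₂ σ σ, fun u v => hT x (σ u) (σ v)⟩
      map_add' := fun x y => by ext; simp
      map_smul' := fun c x => by ext; simp }
  have h_ker : LinearMap.ker T' ≤ LinearMap.ker T := by
    refine fun x hx => LinearMap.ext₂ fun u v => ?_
    have huv : T x (σ (L.rangeRestrict u)) (σ (L.rangeRestrict v)) = 0 :=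
      LinearMap.congr_fun₂ (congrArg Subtype.val hx) (L.rangeRestrict u) (L.rangeRestrict v)
    rwa [h_section, hT, h_section, hT] at huv
  calc finrank F X
      = finrank F (LinearMap.ker T') + finrank F (LinearMap.range T') := by
        rw [add_comm, T'.finrank_range_add_finrank_ker]
    _ ≤ _ := add_le_add (Submodule.finrank_mono h_ker)
        ((Submodule.finrank_le _).trans (finrank_symmetricForms_le _ _))

section Codimension

variable [FiniteDimensional F V]

theorem finrank_le_finrank_radicalModulo_add (hB : B.IsAlt) (hφ : φ ∈ jacobiPairings B) :
    finrank F V ≤ finrank F (radicalModulo B (LinearMap.ker φ.flip)) +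
      (finrank F (LinearMap.range φ) + (finrank F (LinearMap.range φ) + 1).choose 2) := by
  -- For `x ∈ ker φ` the Jacobi identity says exactly that `(u, v) ↦ φ u (B x v)` is symmetric.
  let T : LinearMap.ker φ →ₗ[F] V →ₗ[F] V →ₗ[F] F :=
    { toFun := fun x => φ.compl₂ (B x)
      map_add' := fun x y => by ext; simp
      map_smul' := fun c x => by ext; simp }
  have hT : ∀ x, T x ∈ symmetricForms F V := by
    rintro ⟨x, hx⟩ u v
    have h := hφ x u v
    rw [LinearMap.mem_ker.1 hx, ← hB.neg x v, map_neg] at h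
    simpa [T, neg_add_eq_zero] using h
  have hle := finrank_le_finrank_ker_add_of_symmetric T hT φ fun x u hu => by ext v; simp [T, hu]
  have h_ker : finrank F (LinearMap.ker T) ≤
      finrank F (radicalModulo B (LinearMap.ker φ.flip)) := by
    rw [← Submodule.finrank_map_subtype_eq]
    refine Submodule.finrank_mono ?_
    rintro _ ⟨x, hx, rfl⟩
    refine mem_radicalModulo.2 fun v => LinearMap.ext fun u => ?_
    exact LinearMap.congr_fun₂ (LinearMap.mem_ker.1 hx) u v
  have := φ.finrank_range_add_finrank_ker
  omega

theorem finrank_le_finrank_radicalModulo_add_two (hB : B.IsAlt) (hφ : φ ∈ jacobiPairings B)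
    (h : finrank F (LinearMap.range φ) ≤ 1) :
    finrank F V ≤ finrank F (radicalModulo B (LinearMap.ker φ.flip)) + 2 := by
  have hle := finrank_le_finrank_radicalModulo_add hB hφ
  interval_cases finrank F (LinearMap.range φ) <;> simp at hle <;> omega

theorem finrank_range_le_two_of_mem_jacobiPairings [FiniteDimensional F W] (hB : B.IsAlt)
    (hnd : radicalModulo B ⊥ = ⊥) (hW : finrank F W = 3) (hV : 10 ≤ finrank F V)
    (hφ : φ ∈ jacobiPairings B) : finrank F (LinearMap.range φ) ≤ 2 := by
  by_contra! hr
  have hdim := finrank_range_add_finrank_ker_flip φ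
  have hker : LinearMap.ker φ.flip = ⊥ := Submodule.finrank_eq_zero.1 (by omega)
  have hle := finrank_le_finrank_radicalModulo_add hB hφ
  have h3 : finrank F (LinearMap.range φ) = 3 := by omega
  rw [hker, hnd, finrank_bot, h3, Nat.choose_two_right] at hle
  omega

omit [FiniteDimensional F V] in
theorem radicalModulo_sup_ne_top (hspan : ⨆ x, LinearMap.range (B x) = ⊤) {S T : Submodule F W}
    (hST : S ⊔ T ≠ ⊤) : radicalModulo B S ⊔ radicalModulo B T ≠ ⊤ := by
  refine fun h => hST (top_le_iff.1 (hspan ▸ iSup_le fun x => ?_))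
  rintro _ ⟨y, rfl⟩
  obtain ⟨s, hs, t, ht, rfl⟩ := Submodule.mem_sup.1 (h ▸ Submodule.mem_top : x ∈ _)
  rw [map_add]
  exact Submodule.add_mem_sup (mem_radicalModulo.1 hs y) (mem_radicalModulo.1 ht y)

theorem ker_flip_inf_ker_flip_ne_bot [FiniteDimensional F W] (hB : B.IsAlt)
    (hnd : radicalModulo B ⊥ = ⊥) (hspan : ⨆ x, LinearMap.range (B x) = ⊤)
    (hW : finrank F W = 3) (hV : 10 ≤ finrank F V)
    (hφ : φ ∈ jacobiPairings B) (hψ : ψ ∈ jacobiPairings B) :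
    LinearMap.ker φ.flip ⊓ LinearMap.ker ψ.flip ≠ ⊥ := by
  intro h
  have h_disj := radicalModulo_inf (B := B) (LinearMap.ker φ.flip) (LinearMap.ker ψ.flip)
  rw [h, hnd, eq_comm] at h_disj
  have h_rad := Submodule.finrank_sup_add_finrank_inf_eq
    (radicalModulo B (LinearMap.ker φ.flip)) (radicalModulo B (LinearMap.ker ψ.flip))
  have h_ker := Submodule.finrank_sup_add_finrank_inf_eq
    (LinearMap.ker φ.flip) (LinearMap.ker ψ.flip)
  rw [h_disj, finrank_bot] at h_rad
  rw [h, finrank_bot] at h_ker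
  have hleφ := finrank_le_finrank_radicalModulo_add hB hφ
  have hleψ := finrank_le_finrank_radicalModulo_add hB hψ
  have hφ2 := finrank_range_le_two_of_mem_jacobiPairings hB hnd hW hV hφ
  have hψ2 := finrank_range_le_two_of_mem_jacobiPairings hB hnd hW hV hψ
  have hdimφ := finrank_range_add_finrank_ker_flip φ
  have hdimψ := finrank_range_add_finrank_ker_flip ψ
  -- The radicals have codimension at most 5, with equality only if both kernels are lines,
  -- and then the kernels, hence the radicals, do not span.
  have h_lt (hlt : finrank F ↥(LinearMap.ker φ.flip ⊔ LinearMap.ker ψ.flip) < finrank F W) :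
      finrank F ↥(radicalModulo B (LinearMap.ker φ.flip) ⊔
        radicalModulo B (LinearMap.ker ψ.flip)) < finrank F V :=
    Submodule.finrank_lt (radicalModulo_sup_ne_top hspan fun htop =>
      hlt.ne (by rw [htop, finrank_top]))
  have h_le := Submodule.finrank_le
    (radicalModulo B (LinearMap.ker φ.flip) ⊔ radicalModulo B (LinearMap.ker ψ.flip))
  generalize finrank F (LinearMap.range φ) = r at *
  generalize finrank F (LinearMap.range ψ) = s at *
  rw [Nat.choose_two_right, Nat.add_sub_cancel] at hleφ hleψ
  interval_cases r <;> interval_cases s <;> omega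

theorem ker_flip_le_ker_flip_of_finrank_range_eq_two [FiniteDimensional F W] (hB : B.IsAlt)
    (hnd : radicalModulo B ⊥ = ⊥) (hspan : ⨆ x, LinearMap.range (B x) = ⊤)
    (hW : finrank F W = 3) (hV : 10 ≤ finrank F V)
    (hφ : φ ∈ jacobiPairings B) (hr : finrank F (LinearMap.range φ) = 2)
    (hψ : ψ ∈ jacobiPairings B) : LinearMap.ker φ.flip ≤ LinearMap.ker ψ.flip := by
  have hdim := finrank_range_add_finrank_ker_flip φ
  have hatom : IsAtom (LinearMap.ker φ.flip) :=
    Submodule.isAtom_iff_finrank_eq_one.2 (by omega)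
  rw [← hatom.not_disjoint_iff_le, disjoint_iff]
  exact ker_flip_inf_ker_flip_ne_bot hB hnd hspan hW hV hφ hψ

theorem ker_flip_inf_inf_ne_bot [FiniteDimensional F W] (hB : B.IsAlt)
    (hnd : radicalModulo B ⊥ = ⊥) (hspan : ⨆ x, LinearMap.range (B x) = ⊤)
    (hW : finrank F W = 3) (hV : 10 ≤ finrank F V) (hφ : φ ∈ jacobiPairings B)
    (hψ : ψ ∈ jacobiPairings B) (hχ : χ ∈ jacobiPairings B) :
    LinearMap.ker φ.flip ⊓ LinearMap.ker ψ.flip ⊓ LinearMap.ker χ.flip ≠ ⊥ := by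
  intro h
  have h_rank {θ : V →ₗ[F] Dual F W} (hθ : θ ∈ jacobiPairings B) :
      finrank F (LinearMap.range θ) ≤ 1 := by
    by_contra! hgt
    have hr : finrank F (LinearMap.range θ) = 2 :=
      (finrank_range_le_two_of_mem_jacobiPairings hB hnd hW hV hθ).antisymm hgt
    have h_le {ξ : V →ₗ[F] Dual F W} (hξ : ξ ∈ jacobiPairings B) :=
      ker_flip_le_ker_flip_of_finrank_range_eq_two hB hnd hspan hW hV hθ hr hξ
    have hbot : LinearMap.ker θ.flip = ⊥ :=
      le_bot_iff.1 (h ▸ le_inf (le_inf (h_le hφ) (h_le hψ)) (h_le hχ))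
    have hdim := finrank_range_add_finrank_ker_flip θ
    rw [hbot, finrank_bot] at hdim
    omega
  have h_rad := congrArg (radicalModulo B) h
  rw [radicalModulo_inf, radicalModulo_inf, hnd] at h_rad
  have h_dim₂ := Submodule.finrank_sup_add_finrank_inf_eq
    (radicalModulo B (LinearMap.ker φ.flip)) (radicalModulo B (LinearMap.ker ψ.flip))
  have h_dim₃ := Submodule.finrank_sup_add_finrank_inf_eq
    (radicalModulo B (LinearMap.ker φ.flip) ⊓ radicalModulo B (LinearMap.ker ψ.flip))
    (radicalModulo B (LinearMap.ker χ.flip))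
  rw [h_rad, finrank_bot] at h_dim₃
  have h_sup₂ := Submodule.finrank_le
    (radicalModulo B (LinearMap.ker φ.flip) ⊔ radicalModulo B (LinearMap.ker ψ.flip))
  have h_sup₃ := Submodule.finrank_le
    (radicalModulo B (LinearMap.ker φ.flip) ⊓ radicalModulo B (LinearMap.ker ψ.flip) ⊔
      radicalModulo B (LinearMap.ker χ.flip))
  have hφ2 := finrank_le_finrank_radicalModulo_add_two hB hφ (h_rank hφ)
  have hψ2 := finrank_le_finrank_radicalModulo_add_two hB hψ (h_rank hψ)
  have hχ2 := finrank_le_finrank_radicalModulo_add_two hB hχ (h_rank hχ)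
  omega

theorem exists_inf_inf_eq_bot_of_sInf_eq_bot [FiniteDimensional F W] (hW : finrank F W = 3)
    {s : Set (Submodule F W)} (hs : sInf s = ⊥) :
    ∃ S₁ ∈ s, ∃ S₂ ∈ s, ∃ S₃ ∈ s, S₁ ⊓ S₂ ⊓ S₃ = ⊥ := by
  have hne : s.Nonempty := by
    rw [Set.nonempty_iff_ne_empty]
    rintro rfl
    have := finrank_top F W
    rw [← sInf_empty, hs, finrank_bot] at this
    omega
  have h_drop (U : Submodule F W) : ∃ S ∈ s, finrank F ↥(U ⊓ S) ≤ finrank F U - 1 := by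
    by_cases hU : ∀ S ∈ s, U ≤ S
    · obtain rfl : U = ⊥ := le_bot_iff.1 (hs ▸ le_sInf hU)
      obtain ⟨S, hS⟩ := hne
      exact ⟨S, hS, by simp⟩
    · push Not at hU
      obtain ⟨S, hS, hle⟩ := hU
      exact ⟨S, hS, Nat.le_sub_one_of_lt (Submodule.finrank_lt_finrank_of_lt (inf_lt_left.2 hle))⟩
  obtain ⟨S₁, hS₁, h₁⟩ := h_drop ⊤
  obtain ⟨S₂, hS₂, h₂⟩ := h_drop S₁
  obtain ⟨S₃, hS₃, h₃⟩ := h_drop (S₁ ⊓ S₂)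
  rw [top_inf_eq, finrank_top, hW] at h₁
  exact ⟨S₁, hS₁, S₂, hS₂, S₃, hS₃, Submodule.finrank_eq_zero.1 (by omega)⟩

theorem exists_ne_zero_of_forall_mem_jacobiPairings [FiniteDimensional F W] (hB : B.IsAlt)
    (hnd : radicalModulo B ⊥ = ⊥) (hspan : ⨆ x, LinearMap.range (B x) = ⊤)
    (hW : finrank F W = 3) (hV : 10 ≤ finrank F V) :
    ∃ w : W, w ≠ 0 ∧ ∀ φ ∈ jacobiPairings B, ∀ x, φ x w = 0 := by
  have hne : sInf ((fun φ : V →ₗ[F] Dual F W => LinearMap.ker φ.flip) '' jacobiPairings B) ≠ ⊥ := by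
    intro hbot
    obtain ⟨_, ⟨φ, hφ, rfl⟩, _, ⟨ψ, hψ, rfl⟩, _, ⟨χ, hχ, rfl⟩, h⟩ :=
      exists_inf_inf_eq_bot_of_sInf_eq_bot hW hbot
    exact ker_flip_inf_inf_ne_bot hB hnd hspan hW hV hφ hψ hχ h
  obtain ⟨w, hw, hw0⟩ := Submodule.exists_mem_ne_zero_of_ne_bot hne
  exact ⟨w, hw0, fun φ hφ x => LinearMap.congr_fun (Submodule.mem_sInf.1 hw _ ⟨φ, hφ, rfl⟩) x⟩

theorem finrank_jacobiPairings_le_of_range_eq_top [FiniteDimensional F W] (hB : B.IsAlt) {y : V}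
    (hy : LinearMap.range (B y) = ⊤) :
    finrank F (jacobiPairings B) ≤ finrank F W + (finrank F W + 1).choose 2 := by
  let ev : jacobiPairings B →ₗ[F] Dual F W :=
    LinearMap.applyₗ y ∘ₗ (jacobiPairings B).subtype
  -- If `φ y = 0`, then `(u, v) ↦ φ u (B y v)` is symmetric and determines `φ`.
  let T : LinearMap.ker ev →ₗ[F] V →ₗ[F] V →ₗ[F] F :=
    { toFun := fun φ => φ.1.1.compl₂ (B y)
      map_add' := fun φ ψ => by ext; simp
      map_smul' := fun c φ => by ext; simp }
  have hT : ∀ φ, T φ ∈ symmetricForms F V := by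
    rintro ⟨⟨φ, hφ⟩, hφy : φ y = 0⟩ u v
    have h := hφ y u v
    rw [hφy, ← hB.neg y v, map_neg] at h
    simpa [T, neg_add_eq_zero] using h
  have hL (φ : LinearMap.ker ev) (u : V) (hu : B y u = 0) : T φ u = 0 := by
    ext v
    rw [LinearMap.zero_apply, hT φ u v]
    simp [T, hu]
  have h_ker : LinearMap.ker T = ⊥ := by
    refine LinearMap.ker_eq_bot'.2 fun φ hφ =>
      Subtype.ext (Subtype.ext (LinearMap.ext₂ fun u w => ?_))
    obtain ⟨v, rfl⟩ := LinearMap.range_eq_top.1 hy w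
    exact LinearMap.congr_fun₂ hφ u v
  have h_le := finrank_le_finrank_ker_add_of_symmetric (X := LinearMap.ker ev) T hT (B y) hL
  rw [h_ker, finrank_bot, hy, finrank_top, zero_add] at h_le
  have h_range : finrank F (LinearMap.range ev) ≤ finrank F W :=
    (Submodule.finrank_le _).trans_eq Subspace.dual_finrank_eq
  have := ev.finrank_range_add_finrank_ker
  omega

end Codimension

theorem exists_eq_smul_of_finrank_range_le_one [FiniteDimensional F W] {f : V →ₗ[F] W}
    (hf : finrank F (LinearMap.range f) ≤ 1) {u : V} (hu : f u ≠ 0) (v : V) :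
    ∃ c : F, f v = c • f u := by
  have hpos : 0 < finrank F (LinearMap.range f) := by
    rw [Nat.pos_iff_ne_zero, Ne, Submodule.finrank_eq_zero]
    exact fun h0 => hu ((Submodule.mem_bot F).1 (h0 ▸ LinearMap.mem_range_self f u))
  obtain ⟨c, hc⟩ := exists_smul_eq_of_finrank_eq_one (hf.antisymm hpos)
    (x := ⟨f u, u, rfl⟩) (Subtype.coe_ne_coe.1 hu) ⟨f v, v, rfl⟩
  exact ⟨c, (congrArg Subtype.val hc).symm⟩

theorem exists_apply_notMem_of_finrank_lt (hspan : ⨆ x, LinearMap.range (B x) = ⊤)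
    {S : Submodule F W} (hS : finrank F S < finrank F W) : ∃ x u, B x u ∉ S := by
  by_contra! hmem
  have htop : S = ⊤ := top_le_iff.1 <| hspan ▸ iSup_le fun x => by
    rintro _ ⟨u, rfl⟩
    exact hmem x u
  rw [htop, finrank_top] at hS
  exact hS.false

theorem exists_range_eq_top_of_finrank_eq_two (hB : B.IsAlt)
    (hspan : ⨆ x, LinearMap.range (B x) = ⊤) (hW : finrank F W = 2) :
    ∃ y, LinearMap.range (B y) = ⊤ := by
  have : FiniteDimensional F W := finite_of_finrank_pos (by omega)
  by_contra! hne
  have h_smul {x u : V} (hu : B x u ≠ 0) (v : V) : ∃ c : F, B x v = c • B x u :=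
    exists_eq_smul_of_finrank_range_le_one (by have := Submodule.finrank_lt (hne x); omega) hu v
  obtain ⟨y, u, hyu⟩ := exists_apply_notMem_of_finrank_lt hspan (S := ⊥) (by simp [hW])
  rw [Submodule.mem_bot] at hyu
  obtain ⟨y', u', hindep⟩ := exists_apply_notMem_of_finrank_lt hspan (S := F ∙ B y u)
    (by rw [finrank_span_singleton hyu]; omega)
  have hy'u' : B y' u' ≠ 0 := fun h0 => hindep (h0 ▸ Submodule.zero_mem _)
  have h_indep {a b : F} (h : a • B y u = b • B y' u') : b = 0 := by
    by_contra hb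
    refine hindep (Submodule.mem_span_singleton.2 ⟨b⁻¹ * a, ?_⟩)
    rw [mul_smul, h, inv_smul_smul₀ hb]
  -- A value of `B` on `y` and `u'` lies on the lines `range (B y)` and `range (B u')`, which
  -- contain `B y u` and `B y' u'` respectively.
  have hyu' : B y u' = 0 := by
    obtain ⟨c, hc⟩ := h_smul hyu u'
    obtain ⟨d, hd⟩ := h_smul (x := u') (u := y') (by rwa [← hB.neg, neg_ne_zero]) y
    rw [← hB.neg, ← hB.neg y', smul_neg, neg_inj] at hd
    rw [hd, h_indep (hc.symm.trans hd), zero_smul]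
  have hy'u : B y' u = 0 := by
    obtain ⟨c, hc⟩ := h_smul hy'u' u
    obtain ⟨d, hd⟩ := h_smul (x := u) (u := y) (by rwa [← hB.neg, neg_ne_zero]) y'
    rw [← hB.neg, ← hB.neg y, smul_neg, neg_inj] at hd
    rw [hc, h_indep (hd.symm.trans hc), zero_smul]
  obtain ⟨c, hc⟩ := h_smul (x := y + y') (u := u) (by simpa [hy'u] using hyu) u'
  refine one_ne_zero (h_indep (a := c) (b := (1 : F)) ?_)
  simpa [hyu', hy'u] using hc.symm

section Transfer

variable [FiniteDimensional F V] [FiniteDimensional F W]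

theorem finrank_jacobiPairings_le_of_le_ker_flip (K : Submodule F W)
    (hK : ∀ φ ∈ jacobiPairings B, K ≤ LinearMap.ker φ.flip) :
    finrank F (jacobiPairings B) ≤ finrank F (jacobiPairings (B.compr₂ K.mkQ)) := by
  have h_le : jacobiPairings B ≤
      (jacobiPairings (B.compr₂ K.mkQ)).map (LinearMap.compRight F K.mkQ.dualMap) := by
    intro φ hφ
    refine ⟨(K.liftQ φ.flip (hK φ hφ)).flip, fun x y z => ?_, rfl⟩
    exact hφ x y z
  exact (Submodule.finrank_mono h_le).trans (Submodule.finrank_map_le _ _)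

theorem finrank_jacobiPairings_le_five (hB : B.IsAlt)
    (hnd : radicalModulo B ⊥ = ⊥) (hspan : ⨆ x, LinearMap.range (B x) = ⊤)
    (hW : finrank F W = 3) (hV : 10 ≤ finrank F V) : finrank F (jacobiPairings B) ≤ 5 := by
  obtain ⟨w, hw, hvanish⟩ :=
    exists_ne_zero_of_forall_mem_jacobiPairings hB hnd hspan hW hV
  have hdim : finrank F (W ⧸ F ∙ w) = 2 := by
    have := (F ∙ w).finrank_quotient_add_finrank
    rw [finrank_span_singleton hw] at this
    omega
  have halt : (B.compr₂ (F ∙ w).mkQ).IsAlt := fun x => by simp [hB x]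
  have hspan' : ⨆ x, LinearMap.range ((B.compr₂ (F ∙ w).mkQ) x) = ⊤ := by
    have hmap (x : V) : LinearMap.range ((B.compr₂ (F ∙ w).mkQ) x) =
        (LinearMap.range (B x)).map (F ∙ w).mkQ := LinearMap.range_comp _ _
    simp_rw [hmap, ← Submodule.map_iSup, hspan, Submodule.map_top, Submodule.range_mkQ]
  obtain ⟨y, hy⟩ := exists_range_eq_top_of_finrank_eq_two halt hspan' hdim
  calc finrank F (jacobiPairings B)
      ≤ finrank F (jacobiPairings (B.compr₂ (F ∙ w).mkQ)) := by
        refine finrank_jacobiPairings_le_of_le_ker_flip _ fun φ hφ => ?_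
        rw [Submodule.span_singleton_le_iff_mem]
        exact LinearMap.ext (hvanish φ hφ)
    _ ≤ 2 + (2 + 1).choose 2 := hdim ▸ finrank_jacobiPairings_le_of_range_eq_top halt hy
    _ = 5 := rfl

end Transfer

end JacobiPairings

section Cocycles

open scoped commutatorElement

variable (G : Type*) {Q : Type*} [Group G] [Group Q] (A : Type*) [AddCommGroup A]

/-- The additive group `Z²(G, A)` of inhomogeneous 2-cocycles of `G` with values in the trivial
`G`-module `A`, in curried form. -/
def twoCocycles : AddSubgroup (G → G → A) where
  carrier := {f | ∀ g h j, f (g * h) j + f g h = f h j + f g (h * j)}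
  zero_mem' := by simp
  add_mem' {f f'} hf hf' g h j := by
    simpa only [Pi.add_apply, add_add_add_comm] using congrArg₂ (· + ·) (hf g h j) (hf' g h j)
  neg_mem' {f} hf g h j := by
    simpa only [Pi.neg_apply, neg_add] using congrArg Neg.neg (hf g h j)

variable {G A}

instance : CoeFun (twoCocycles G A) fun _ => G → G → A := ⟨Subtype.val⟩

namespace twoCocycles

theorem apply_mul_add (f : twoCocycles G A) (g h j : G) :
    f (g * h) j + f g h = f h j + f g (h * j) :=
  f.2 g h j

theorem apply_one_left (f : twoCocycles G A) (g : G) : f 1 g = f 1 1 := by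
  simpa using (apply_mul_add f 1 1 g).symm

theorem apply_one_right (f : twoCocycles G A) (g : G) : f g 1 = f 1 1 := by
  simpa using apply_mul_add f g 1 1

/-- The pullback of cocycles along a group homomorphism. -/
def inflation (A : Type*) [AddCommGroup A] (φ : G →* Q) : twoCocycles Q A →+ twoCocycles G A where
  toFun f := ⟨fun g h => f (φ g) (φ h), fun g h j => by
    simpa using apply_mul_add f (φ g) (φ h) (φ j)⟩
  map_zero' := rfl
  map_add' _ _ := rfl

@[simp]
theorem inflation_apply (φ : G →* Q) (f : twoCocycles Q A) (g h : G) :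
    inflation A φ f g h = f (φ g) (φ h) :=
  rfl

theorem mem_range_inflation {φ : G →* Q} (hφ : Function.Surjective φ) {f : twoCocycles G A}
    (hf : ∀ ⦃g g' h h'⦄, φ g = φ g' → φ h = φ h' → f g h = f g' h') :
    f ∈ (inflation A φ).range := by
  let s := Function.surjInv hφ
  have hs (x : Q) : φ (s x) = x := Function.surjInv_eq hφ x
  have descends (g h : G) : f (s (φ g)) (s (φ h)) = f g h := hf (hs _) (hs _)
  refine ⟨⟨fun x y => f (s x) (s y), fun x y z => ?_⟩, ?_⟩
  · obtain ⟨⟨g, rfl⟩, ⟨h, rfl⟩, ⟨j, rfl⟩⟩ := And.intro (hφ x) (And.intro (hφ y) (hφ z))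
    simpa only [← map_mul, descends] using apply_mul_add f g h j
  · ext g h
    exact descends g h

/-- The inhomogeneous coboundary map from 1-cochains to 2-cocycles. -/
def coboundary (G A : Type*) [Group G] [AddCommGroup A] : (G → A) →+ twoCocycles G A where
  toFun u := ⟨fun g h => u g + u h - u (g * h), fun g h j => by simp only [mul_assoc]; abel⟩
  map_zero' := by ext; simp
  map_add' u v := by ext; simp only [Pi.add_apply, AddSubgroup.coe_add]; abel

@[simp]
theorem coboundary_apply (u : G → A) (g h : G) : coboundary G A u g h = u g + u h - u (g * h) :=
  rfl

/-- The antisymmetrization of a cocycle, which computes commutators in the extension it defines. -/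
def skew (f : twoCocycles G A) (g h : G) : A :=
  f g h - f h g

theorem skew_swap (f : twoCocycles G A) (g h : G) : skew f h g = -skew f g h :=
  (neg_sub _ _).symm

theorem skew_mul_left (f : twoCocycles G A) {g h z : G} (hg : Commute g z) (hh : Commute h z) :
    skew f (g * h) z = skew f g z + skew f h z := by
  have h₁ := apply_mul_add f g h z
  have h₂ := apply_mul_add f z g h
  have h₃ := apply_mul_add f g z h
  rw [hg.eq] at h₃
  rw [hh.eq] at h₁
  simp only [skew]
  linear_combination (norm := module) h₁ + h₂ - h₃

theorem skew_mul_right (f : twoCocycles G A) {g z w : G} (hz : Commute z g) (hw : Commute w g) :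
    skew f g (z * w) = skew f g z + skew f g w := by
  rw [skew_swap f _ g, skew_mul_left f hz hw, skew_swap f g z, skew_swap f g w]
  abel

end twoCocycles

open twoCocycles

/-- The subgroup `B²(G, A)` of 2-coboundaries inside `Z²(G, A)`. -/
def twoCoboundaries (G A : Type*) [Group G] [AddCommGroup A] : AddSubgroup (twoCocycles G A) :=
  (coboundary G A).range

/-- The central extension of `G` by `A` with factor set `f`, carried by `A × G`. -/
@[ext]
structure CocycleExtension (f : twoCocycles G A) where
  /-- The coordinate in the kernel `A`. -/
  fst : A
  /-- The coordinate in the quotient `G`. -/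
  snd : G

namespace CocycleExtension

variable {f : twoCocycles G A}

instance : Mul (CocycleExtension f) := ⟨fun s t => ⟨s.fst + t.fst + f s.snd t.snd, s.snd * t.snd⟩⟩
instance : One (CocycleExtension f) := ⟨⟨-f 1 1, 1⟩⟩
instance : Inv (CocycleExtension f) := ⟨fun s => ⟨-s.fst - f s.snd⁻¹ s.snd - f 1 1, s.snd⁻¹⟩⟩

@[simp] theorem fst_mul (s t : CocycleExtension f) :
    (s * t).fst = s.fst + t.fst + f s.snd t.snd := rfl
@[simp] theorem snd_mul (s t : CocycleExtension f) : (s * t).snd = s.snd * t.snd := rfl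
@[simp] theorem fst_one : (1 : CocycleExtension f).fst = -f 1 1 := rfl
@[simp] theorem snd_one : (1 : CocycleExtension f).snd = 1 := rfl
@[simp] theorem fst_inv (s : CocycleExtension f) :
    s⁻¹.fst = -s.fst - f s.snd⁻¹ s.snd - f 1 1 := rfl
@[simp] theorem snd_inv (s : CocycleExtension f) : s⁻¹.snd = s.snd⁻¹ := rfl

instance : Group (CocycleExtension f) :=
  Group.ofLeftAxioms
    (fun s t u => by
      ext
      · simp only [fst_mul, snd_mul]
        linear_combination (norm := module) apply_mul_add f s.snd t.snd u.snd
      · exact mul_assoc _ _ _)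
    (fun s => by
      ext
      · simp [apply_one_left f]
      · exact one_mul _)
    (fun s => by
      ext
      · simp only [fst_mul, fst_inv, snd_inv, fst_one]
        abel
      · exact inv_mul_cancel _)

/-- The embedding of the kernel `A` into the extension. -/
def inl (f : twoCocycles G A) : Multiplicative A →* CocycleExtension f where
  toFun a := ⟨a.toAdd - f 1 1, 1⟩
  map_one' := by ext <;> simp
  map_mul' a b := by
    ext
    · simp only [toAdd_mul, fst_mul]
      abel
    · simp

@[simp] theorem fst_inl (a : Multiplicative A) : (inl f a).fst = a.toAdd - f 1 1 := rfl
@[simp] theorem snd_inl (a : Multiplicative A) : (inl f a).snd = 1 := rfl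

theorem inl_injective : Function.Injective (inl f) := fun a b h => by
  simpa using congrArg fst h

theorem inl_mul (a : Multiplicative A) (s : CocycleExtension f) :
    inl f a * s = ⟨a.toAdd + s.fst, s.snd⟩ := by
  ext
  · simp only [fst_mul, fst_inl, snd_inl, apply_one_left f]
    abel
  · simp

theorem commutatorElement_eq_inl {s t : CocycleExtension f} (h : Commute s.snd t.snd) :
    ⁅s, t⁆ = inl f (.ofAdd (skew f s.snd t.snd)) := by
  rw [commutatorElement_def, mul_inv_eq_iff_eq_mul, mul_inv_eq_iff_eq_mul, mul_assoc, inl_mul]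
  ext
  · simp only [fst_mul, toAdd_ofAdd, skew]
    abel
  · exact h.eq

end CocycleExtension

theorem mem_twoCoboundaries_of_symm {Q : Type*} [CommGroup Q] [DivisibleBy A ℤ]
    {f : twoCocycles Q A} (hf : ∀ x y, f x y = f y x) : f ∈ twoCoboundaries Q A := by
  let _ : CommGroup (CocycleExtension f) :=
    { mul_comm := fun s t => by ext <;> simp [hf s.snd t.snd, add_comm s.fst, mul_comm s.snd] }
  obtain ⟨r, hr⟩ := (Module.Baer.of_divisible A).extension_property_addMonoidHom
    (CocycleExtension.inl f).toAdditive CocycleExtension.inl_injective (AddMonoidHom.id A)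
  have retract (a : A) : r (.ofMul (CocycleExtension.inl f (.ofAdd a))) = a :=
    DFunLike.congr_fun hr a
  let lift (x : Q) : CocycleExtension f := ⟨0, x⟩
  have mul_lift (x y : Q) :
      lift x * lift y = CocycleExtension.inl f (.ofAdd (f x y)) * lift (x * y) := by
    rw [CocycleExtension.inl_mul]
    ext <;> simp [lift]
  refine ⟨fun x => r (.ofMul (lift x)), ?_⟩
  ext x y
  rw [coboundary_apply, ← map_add, ← ofMul_mul, mul_lift, ofMul_mul, map_add, retract]
  simp

end Cocycles

section Pairings

open scoped commutatorElement IsMulCommutative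

open twoCocycles Subgroup

variable {G : Type*} [Group G] {A : Type*} [AddCommGroup A]

/-- The pairing `f(g, z) - f(z, g)` between `G / G'` and the center of `G` attached to a cocycle. -/
def centralPairing (G A : Type*) [Group G] [AddCommGroup A] :
    twoCocycles G A →+ (Additive (Abelianization G) →+ Additive (center G) →+ A) where
  toFun f := MonoidHom.toAdditiveLeft <| Abelianization.lift <| MonoidHom.mk'
    (fun g => .ofAdd <| AddMonoidHom.mk' (fun z => skew f g z.toMul) fun z w =>
      skew_mul_right f (mem_center_iff.1 z.toMul.2 g).symm (mem_center_iff.1 w.toMul.2 g).symm)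
    fun g h => Multiplicative.toAdd.injective <| AddMonoidHom.ext fun z =>
      skew_mul_left f (mem_center_iff.1 z.toMul.2 g) (mem_center_iff.1 z.toMul.2 h)
  map_zero' := by
    ext g z
    exact sub_self 0
  map_add' _ _ := by
    ext g z
    exact add_sub_add_comm _ _ _ _

/-- The alternating pairing `f(x, y) - f(y, x)` attached to a cocycle of a commutative group. -/
def alternator (Q A : Type*) [CommGroup Q] [AddCommGroup A] :
    twoCocycles Q A →+ (Additive Q →+ Additive Q →+ A) where
  toFun f := AddMonoidHom.mk' (fun x => AddMonoidHom.mk' (fun y => skew f x.toMul y.toMul)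
      fun _ _ => skew_mul_right f (.all _ _) (.all _ _))
    fun _ _ => AddMonoidHom.ext fun _ => skew_mul_left f (.all _ _) (.all _ _)
  map_zero' := by
    ext x y
    exact sub_self 0
  map_add' _ _ := by
    ext x y
    exact add_sub_add_comm _ _ _ _

@[simp]
theorem alternator_apply {Q : Type*} [CommGroup Q] (f : twoCocycles Q A) (x y : Additive Q) :
    alternator Q A f x y = skew f x.toMul y.toMul :=
  rfl

theorem alternator_self {Q : Type*} [CommGroup Q] (f : twoCocycles Q A) (x : Additive Q) :
    alternator Q A f x x = 0 :=
  sub_self _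

theorem ker_alternator_le {Q : Type*} [CommGroup Q] [DivisibleBy A ℤ] :
    (alternator Q A).ker ≤ twoCoboundaries Q A := fun _ hf =>
  mem_twoCoboundaries_of_symm fun x y => sub_eq_zero.1 <|
    DFunLike.congr_fun (DFunLike.congr_fun hf (Additive.ofMul x)) (Additive.ofMul y)

theorem ofMul_of_surjective :
    Function.Surjective fun g : G => Additive.ofMul (Abelianization.of g) :=
  QuotientGroup.mk_surjective

section CommutatorForm

variable (hG : _root_.commutator G ≤ center G)

include hG

theorem commutatorElement_mem_center (g h : G) : ⁅g, h⁆ ∈ center G :=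
  hG (commutator_mem_commutator (mem_top g) (mem_top h))

theorem commutatorElement_mul_left (g h j : G) : ⁅g * h, j⁆ = ⁅g, j⁆ * ⁅h, j⁆ := by
  have central := mem_center_iff.1 (commutatorElement_mem_center hG h j)
  rw [commutatorElement_mul_left_eq_conj_mul, central g, mul_inv_cancel_right]
  exact (central _).symm

theorem commutatorElement_mul_right (g h j : G) : ⁅g, h * j⁆ = ⁅g, h⁆ * ⁅g, j⁆ := by
  have central := mem_center_iff.1 (commutatorElement_mem_center hG g j)
  rw [commutatorElement_mul_right_eq_mul_conj, mul_assoc _ h, central h, ← mul_assoc,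
    mul_inv_cancel_right]

/-- The commutator map of a group of class at most two, as a biadditive map from `G / G'` to the
center. -/
def commutatorForm :
    Additive (Abelianization G) →+ Additive (Abelianization G) →+ Additive (center G) :=
  MonoidHom.toAdditiveLeft <| Abelianization.lift <| MonoidHom.mk'
    (fun g => .ofAdd <| MonoidHom.toAdditive <| Abelianization.lift <| MonoidHom.mk'
      (fun h => ⟨⁅g, h⁆, commutatorElement_mem_center hG g h⟩)
      fun h j => Subtype.ext <| commutatorElement_mul_right hG g h j)
    fun g h => by
      apply Multiplicative.toAdd.injective
      ext j
      exact commutatorElement_mul_left hG g h j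

@[simp]
theorem commutatorForm_of (g h : G) :
    commutatorForm hG (.ofMul (.of g)) (.ofMul (.of h)) =
      .ofMul ⟨⁅g, h⁆, commutatorElement_mem_center hG g h⟩ :=
  rfl

theorem commutatorForm_self (x : Additive (Abelianization G)) : commutatorForm hG x x = 0 := by
  obtain ⟨g, rfl⟩ := ofMul_of_surjective x
  simp

theorem commutatorElement_conj_commutatorElement_eq_inl {f : twoCocycles G A}
    (s t u v : CocycleExtension f) :
    ⁅s * t * s⁻¹, ⁅u, v⁆⁆ = CocycleExtension.inl f (.ofAdd <| centralPairing G A f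
      (.ofMul (.of t.snd)) (commutatorForm hG (.ofMul (.of u.snd)) (.ofMul (.of v.snd)))) := by
  have central : Commute (s * t * s⁻¹).snd ⁅u, v⁆.snd :=
    mem_center_iff.1 (commutatorElement_mem_center hG u.snd v.snd) _
  have of_conj : Abelianization.of (s.snd * t.snd * s.snd⁻¹) = Abelianization.of t.snd := by
    rw [map_mul, map_mul, map_inv, mul_inv_cancel_comm]
  rw [CocycleExtension.commutatorElement_eq_inl central, ← of_conj]
  rfl

theorem centralPairing_jacobi (f : twoCocycles G A) (x y z : Additive (Abelianization G)) :
    centralPairing G A f x (commutatorForm hG y z) +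
      centralPairing G A f y (commutatorForm hG z x) +
      centralPairing G A f z (commutatorForm hG x y) = 0 := by
  obtain ⟨g, rfl⟩ := ofMul_of_surjective x
  obtain ⟨h, rfl⟩ := ofMul_of_surjective y
  obtain ⟨j, rfl⟩ := ofMul_of_surjective z
  have hallWitt := commutatorElement_conj_commutatorElement_mul
    (⟨0, j⟩ : CocycleExtension f) ⟨0, g⟩ ⟨0, h⟩
  simp only [commutatorElement_conj_commutatorElement_eq_inl hG, ← map_mul, ← ofAdd_add]
    at hallWitt
  rw [add_right_comm]
  exact CocycleExtension.inl_injective (hallWitt.trans (map_one _).symm)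

end CommutatorForm

section Kernel

theorem exists_coordinate (H : Subgroup G) :
    ∃ w : G → H, ∀ (h : H) (g : G), w (h * g) = h * w g := by
  obtain ⟨T, hT, -⟩ := H.exists_isComplement_right 1
  exact ⟨fun g => (hT.equiv g).1, fun h g => by simp [hT.equiv_mul_left]⟩

theorem twoCoboundaries_le_ker_centralPairing :
    twoCoboundaries G A ≤ (centralPairing G A).ker := by
  rintro _ ⟨u, rfl⟩
  ext g z
  change u g + u z - u (g * z) - (u z + u g - u (z * g)) = 0
  rw [mem_center_iff.1 z.2 g, add_comm (u g), sub_self]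

theorem range_inflation_le_ker_centralPairing (hG : center G ≤ _root_.commutator G) :
    (inflation A (Abelianization.of (G := G))).range ≤ (centralPairing G A).ker := by
  rintro _ ⟨f, rfl⟩
  ext g z
  have of_eq_one : Abelianization.of (z : G) = 1 := by
    rw [← MonoidHom.mem_ker, Abelianization.ker_of]
    exact hG z.2
  change f (.of g) (.of z) - f (.of z) (.of g) = 0
  rw [of_eq_one, apply_one_left, apply_one_right, sub_self]

/-- The cochain to subtract is `g ↦ u z - f z (z⁻¹ g)`, where `z` is a coordinate of `g` along the
center and `u` is a cochain on the center with coboundary `f`. -/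
theorem exists_sub_coboundary_invariant [DivisibleBy A ℤ] {f : twoCocycles G A}
    (hf : f ∈ (centralPairing G A).ker) :
    ∃ U : G → A, ∀ (z : center G) (g h : G),
      (f - coboundary G A U) (z * g) h = (f - coboundary G A U) g h ∧
      (f - coboundary G A U) g (z * h) = (f - coboundary G A U) g h := by
  have symm (z : center G) (g : G) : f g z = f z g := sub_eq_zero.1 <|
    DFunLike.congr_fun (DFunLike.congr_fun hf (Additive.ofMul (.of g))) (Additive.ofMul z)
  obtain ⟨u, hu⟩ : inflation A (center G).subtype f ∈ twoCoboundaries (center G) A :=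
    mem_twoCoboundaries_of_symm fun z w => symm w z
  replace hu (z w : center G) : u z + u w - u (z * w) = f z w :=
    congrFun (congrFun (congrArg Subtype.val hu) z) w
  obtain ⟨w, hw⟩ := exists_coordinate (center G)
  let s (g : G) : G := ↑(w g)⁻¹ * g
  have w_mul_s (g : G) : w g * s g = g := by simp [s]
  let U (g : G) : A := u (w g) - f (w g) (s g)
  have U_mul (z : center G) (g : G) : U (z * g) = u z + U g - f z g := by
    have s_mul : s (z * g) = s g := by simp [s, hw, mul_assoc]
    have cocycle := apply_mul_add f z (w g) (s g)
    rw [w_mul_s] at cocycle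
    simp only [U, s_mul, hw, coe_mul]
    linear_combination (norm := module) -hu z (w g) - cocycle
  have sub_apply (g h : G) : (f - coboundary G A U) g h = f g h - (U g + U h - U (g * h)) := rfl
  have swap (z : center G) (g : G) : g * z = z * g := mem_center_iff.1 z.2 g
  refine ⟨U, fun z g h => ⟨?_, ?_⟩⟩
  · rw [sub_apply, sub_apply, mul_assoc, U_mul, U_mul]
    linear_combination (norm := module) apply_mul_add f z g h
  · have cocycle := apply_mul_add f g z h
    rw [sub_apply, sub_apply, ← mul_assoc, swap, mul_assoc, U_mul, U_mul]
    rw [swap, symm] at cocycle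
    linear_combination (norm := module) apply_mul_add f z g h - cocycle

theorem mem_range_inflation_of_invariant (hG : _root_.commutator G ≤ center G)
    {f : twoCocycles G A}
    (hf : ∀ (z : center G) (g h : G), f (z * g) h = f g h ∧ f g (z * h) = f g h) :
    f ∈ (inflation A (Abelianization.of (G := G))).range := by
  have exists_central {g g' : G} (h : Abelianization.of g = .of g') :
      ∃ z : center G, g = z * g' := by
    have mem : g * g'⁻¹ ∈ _root_.commutator G := by
      rw [← Abelianization.ker_of, MonoidHom.mem_ker, map_mul, map_inv, h, mul_inv_cancel]
    exact ⟨⟨_, hG mem⟩, (inv_mul_cancel_right g g').symm⟩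
  refine mem_range_inflation QuotientGroup.mk_surjective fun g g' h h' hg hh => ?_
  obtain ⟨z, rfl⟩ := exists_central hg
  obtain ⟨w, rfl⟩ := exists_central hh
  rw [(hf z _ _).1, (hf w _ _).2]

theorem ker_centralPairing_eq [DivisibleBy A ℤ] (hG : center G = _root_.commutator G) :
    (centralPairing G A).ker =
      twoCoboundaries G A ⊔ (inflation A (Abelianization.of (G := G))).range := by
  refine le_antisymm (fun f hf => ?_) (sup_le twoCoboundaries_le_ker_centralPairing
    (range_inflation_le_ker_centralPairing hG.le))
  obtain ⟨U, hU⟩ := exists_sub_coboundary_invariant hf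
  rw [← add_sub_cancel (coboundary G A U) f]
  exact AddSubgroup.add_mem_sup ⟨U, rfl⟩ (mem_range_inflation_of_invariant hG.ge hU)

/-- The cocycle is descended from the coboundary of `χ ∘ w`, where `w` is a coordinate along the
center: this is the transgression of `χ`. -/
theorem exists_alternator_eq_comp_commutatorForm (hG : _root_.commutator G ≤ center G)
    (χ : Additive (center G) →+ A) :
    ∃ F : twoCocycles (Abelianization G) A,
      inflation A Abelianization.of F ∈ twoCoboundaries G A ∧
        ∀ x y, alternator (Abelianization G) A F x y = χ (commutatorForm hG x y) := by
  obtain ⟨w, hw⟩ := exists_coordinate (center G)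
  let u (g : G) : A := -χ (.ofMul (w g))
  have u_mul (z : center G) (g : G) : u (z * g) = u g - χ (.ofMul z) := by
    simp only [u, hw, ofMul_mul, map_add]
    abel
  have swap (z : center G) (g : G) : g * z = z * g := mem_center_iff.1 z.2 g
  obtain ⟨F, hF⟩ : coboundary G A u ∈ (inflation A (Abelianization.of (G := G))).range := by
    refine mem_range_inflation_of_invariant hG fun z g h => ⟨?_, ?_⟩
    · simp only [coboundary_apply, mul_assoc, u_mul]
      abel
    · simp only [coboundary_apply, ← mul_assoc, swap]
      simp only [mul_assoc, u_mul]
      abel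
  refine ⟨F, ⟨u, hF.symm⟩, fun x y => ?_⟩
  obtain ⟨g, rfl⟩ := ofMul_of_surjective x
  obtain ⟨h, rfl⟩ := ofMul_of_surjective y
  have F_of (g h : G) : F (.of g) (.of h) = u g + u h - u (g * h) :=
    congrFun (congrFun (congrArg Subtype.val hF) g) h
  have mul_swap : g * h = ⁅g, h⁆ * (h * g) := by simp [commutatorElement_def, mul_assoc]
  have u_mul_swap : u (g * h) =
      u (h * g) - χ (.ofMul ⟨⁅g, h⁆, commutatorElement_mem_center hG g h⟩) := by
    rw [← u_mul]
    exact congrArg u mul_swap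
  simp only [alternator_apply, skew, toMul_ofMul, F_of, commutatorForm_of]
  linear_combination (norm := module) -u_mul_swap

end Kernel

end Pairings

section Index

open twoCocycles Subgroup

theorem index_mul_card_map_of_ker_le {M N : Type*} [AddCommGroup M] [AddCommGroup N]
    (φ : M →+ N) {L : AddSubgroup M} (hL : φ.ker ≤ L) :
    L.index * Nat.card (L.map φ) = Nat.card φ.range := by
  rw [← AddSubgroup.relIndex_bot_left, ← AddSubgroup.relIndex_bot_left, mul_comm,
    ← AddSubgroup.relIndex_mul_relIndex ⊥ (L.map φ) φ.range bot_le (AddSubgroup.map_le_range φ L),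
    AddMonoidHom.range_eq_map, AddSubgroup.relIndex_map_map, sup_eq_left.2 hL, top_sup_eq,
    AddSubgroup.relIndex_top_right]

variable {G : Type*} [Group G] {A : Type*} [AddCommGroup A] [DivisibleBy A ℤ]

theorem index_twoCoboundaries (hG : center G = _root_.commutator G) :
    (twoCoboundaries G A).index =
      ((twoCoboundaries G A).comap (inflation A (Abelianization.of (G := G)))).index *
        Nat.card (centralPairing G A).range := by
  rw [← AddSubgroup.relIndex_mul_index twoCoboundaries_le_ker_centralPairing,
    AddSubgroup.index_ker, ker_centralPairing_eq hG, sup_comm, AddSubgroup.relIndex_sup_right,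
    AddSubgroup.index_comap]

theorem index_comap_inflation_mul_card :
    ((twoCoboundaries G A).comap (inflation A (Abelianization.of (G := G)))).index *
      Nat.card (((twoCoboundaries G A).comap (inflation A (Abelianization.of (G := G)))).map
        (alternator (Abelianization G) A)) =
      Nat.card (alternator (Abelianization G) A).range := by
  refine index_mul_card_map_of_ker_le _ (ker_alternator_le.trans ?_)
  rintro _ ⟨u, rfl⟩
  exact ⟨fun g => u (.of g), by ext g h; simp⟩

end Index

section PrimeExponent

open Module twoCocycles Subgroup
open scoped commutatorElement IsMulCommutative

variable {p : ℕ} {U V W A : Type*} [AddCommGroup U] [AddCommGroup V] [AddCommGroup W]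
  [AddCommGroup A] [Module (ZMod p) U] [Module (ZMod p) V] [Module (ZMod p) W]

theorem exists_linearMap₂_lift {ι : U →+ A} (hι : Function.Injective ι)
    (hιp : ∀ a, p • a = 0 → a ∈ ι.range) (β : V →+ W →+ A) :
    ∃ φ : V →ₗ[ZMod p] W →ₗ[ZMod p] U, ∀ v w, ι (φ v w) = β v w := by
  have torsion (v : V) (w : W) : p • β v w = 0 := by
    rw [← map_nsmul, ZModModule.char_nsmul_eq_zero, map_zero]
  choose φ hφ using fun v w => hιp _ (torsion v w)
  let φ₁ (v : V) : W →ₗ[ZMod p] U := AddMonoidHom.toZModLinearMap p <|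
    AddMonoidHom.mk' (φ v) fun w w' => hι <| by simp only [map_add, hφ]
  let φ₂ : V →+ W →ₗ[ZMod p] U := AddMonoidHom.mk' φ₁ fun v v' => by
    ext w
    exact hι <| by
      change ι (φ _ _) = ι (φ _ _ + φ _ _)
      simp only [map_add, hφ, AddMonoidHom.add_apply]
  exact ⟨φ₂.toZModLinearMap p, hφ⟩

theorem natCard_eq_pow_finrank_zmod [Fact p.Prime] [FiniteDimensional (ZMod p) V] :
    Nat.card V = p ^ finrank (ZMod p) V := by
  rw [Module.natCard_eq_pow_finrank (K := ZMod p), Nat.card_zmod]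

variable [Fact p.Prime] [FiniteDimensional (ZMod p) V] [FiniteDimensional (ZMod p) W]
  {ι : ZMod p →+ A} (hι : Function.Injective ι) (hιp : ∀ a, p • a = 0 → a ∈ ι.range)

include hι hιp

theorem finite_addMonoidHom₂ : Finite (V →+ W →+ A) := by
  choose φ hφ using exists_linearMap₂_lift (V := V) (W := W) hι hιp
  have := Module.finite_of_finite (ZMod p) (M := V →ₗ[ZMod p] W →ₗ[ZMod p] ZMod p)
  refine Finite.of_injective φ fun β β' h => ?_
  ext v w
  rw [← hφ, h, hφ]

theorem card_le_pow_finrank_of_lift_mem {S : AddSubgroup (V →+ W →+ A)}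
    {T : Submodule (ZMod p) (V →ₗ[ZMod p] Dual (ZMod p) W)}
    (hST : ∀ β ∈ S, ∀ φ : V →ₗ[ZMod p] Dual (ZMod p) W, (∀ v w, ι (φ v w) = β v w) → φ ∈ T) :
    Nat.card S ≤ p ^ finrank (ZMod p) T := by
  choose φ hφ using exists_linearMap₂_lift (V := V) (W := W) hι hιp
  have := Module.finite_of_finite (ZMod p) (M := T)
  rw [← natCard_eq_pow_finrank_zmod]
  refine Nat.card_le_card_of_injective
    (fun β : S => (⟨φ β, hST β β.2 _ (hφ β)⟩ : T)) fun β β' h => ?_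
  have lift_eq : φ β = φ β' := congrArg Subtype.val h
  ext v w
  rw [← hφ, lift_eq, hφ]

theorem card_range_alternator_le {Q : Type*} [CommGroup Q] [Module (ZMod p) (Additive Q)]
    [FiniteDimensional (ZMod p) (Additive Q)] :
    Nat.card (alternator Q A).range ≤ p ^ (finrank (ZMod p) (Additive Q)).choose 2 := by
  refine (card_le_pow_finrank_of_lift_mem (T := alternatingForms (ZMod p) _) hι hιp ?_).trans
    (Nat.pow_le_pow_right (Nat.Prime.pos Fact.out) (finrank_alternatingForms_le _ _))
  rintro _ ⟨F, rfl⟩ φ hφ x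
  exact hι <| by rw [hφ, alternator_self, map_zero]

end PrimeExponent

section Counting

open Module twoCocycles Subgroup
open scoped commutatorElement IsMulCommutative

variable {G : Type*} [Group G] {p : ℕ} [Fact p.Prime]
  [Module (ZMod p) (Additive (Abelianization G))] [Module (ZMod p) (Additive (center G))]
  [FiniteDimensional (ZMod p) (Additive (Abelianization G))]
  [FiniteDimensional (ZMod p) (Additive (center G))]
  {A : Type*} [AddCommGroup A] {ι : ZMod p →+ A}
  (hι : Function.Injective ι) (hιp : ∀ a, p • a = 0 → a ∈ ι.range)
  (hG : _root_.commutator G ≤ center G)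
  {B : Additive (Abelianization G) →ₗ[ZMod p] Additive (Abelianization G) →ₗ[ZMod p]
    Additive (center G)}
  (hB : ∀ x y, B x y = commutatorForm hG x y)

include hι hιp hB

theorem card_range_centralPairing_le :
    Nat.card (centralPairing G A).range ≤ p ^ finrank (ZMod p) (jacobiPairings B) := by
  refine card_le_pow_finrank_of_lift_mem hι hιp ?_
  rintro _ ⟨f, rfl⟩ φ hφ x y z
  exact hι <| by simp only [map_add, hφ, hB, centralPairing_jacobi, map_zero]

theorem pow_finrank_center_le (hspan : ⨆ x, LinearMap.range (B x) = ⊤) :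
    p ^ finrank (ZMod p) (Additive (center G)) ≤
      Nat.card (((twoCoboundaries G A).comap (inflation A (Abelianization.of (G := G)))).map
        (alternator (Abelianization G) A)) := by
  choose F hF hFB using fun χ : Dual (ZMod p) (Additive (center G)) =>
    exists_alternator_eq_comp_commutatorForm hG (ι.comp χ.toAddMonoidHom)
  have := finite_addMonoidHom₂ (V := Additive (Abelianization G)) (W := Additive (Abelianization G))
    hι hιp
  rw [← Subspace.dual_finrank_eq, ← natCard_eq_pow_finrank_zmod]
  refine Nat.card_le_card_of_injective (fun χ => ⟨_, _, hF χ, rfl⟩) fun χ χ' h => ?_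
  have agree (x y) : χ (B x y) = χ' (B x y) := hι <| by
    have := DFunLike.congr_fun (DFunLike.congr_fun (congrArg Subtype.val h) x) y
    rw [hB]
    exact (hFB χ x y).symm.trans (this.trans (hFB χ' x y))
  rw [← LinearMap.eqLocus_eq_top, eq_top_iff, ← hspan]
  refine iSup_le fun x => ?_
  rintro _ ⟨y, rfl⟩
  exact agree x y

theorem index_twoCoboundaries_mul_pow_le [DivisibleBy A ℤ] (hZ : center G = _root_.commutator G)
    (hspan : ⨆ x, LinearMap.range (B x) = ⊤) :
    (twoCoboundaries G A).index * p ^ finrank (ZMod p) (Additive (center G)) ≤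
      p ^ ((finrank (ZMod p) (Additive (Abelianization G))).choose 2 +
        finrank (ZMod p) (jacobiPairings B)) := by
  rw [index_twoCoboundaries hZ, pow_add]
  calc
    _ ≤ _ := Nat.mul_le_mul_left _ (pow_finrank_center_le hι hιp hG hB hspan)
    _ = Nat.card (alternator (Abelianization G) A).range * Nat.card (centralPairing G A).range := by
      rw [← index_comap_inflation_mul_card, mul_right_comm]
    _ ≤ _ := Nat.mul_le_mul (card_range_alternator_le hι hιp)
      (card_range_centralPairing_le hι hιp hG hB)

end Counting

section GroupCohomology

open groupCohomology

/-- The class of a cocycle in Mathlib's second cohomology group. -/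
noncomputable def twoCocycles.toH2 (G A : Type) [Group G] [AddCommGroup A] :
    twoCocycles G A →+ groupCohomology (Rep.trivial ℤ G A) 2 :=
  (H2π (Rep.trivial ℤ G A)).hom.toAddMonoidHom.comp <| AddMonoidHom.mk'
    (fun f => (⟨fun g => f g.1 g.2, (mem_cocycles₂_iff _).2 f.2⟩ : cocycles₂ (Rep.trivial ℤ G A)))
    fun _ _ => rfl

variable {G A : Type} [Group G] [AddCommGroup A]

theorem twoCocycles.toH2_surjective : Function.Surjective (toH2 G A) := fun x =>
  H2_induction_on (A := Rep.trivial ℤ G A) (C := (· ∈ Set.range (toH2 G A))) x fun c =>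
    ⟨⟨fun g h => c.1 (g, h), (mem_cocycles₂_iff _).1 c.2⟩, rfl⟩

theorem twoCocycles.ker_toH2 : (toH2 G A).ker = twoCoboundaries G A := by
  ext f
  refine (H2π_eq_zero_iff (A := Rep.trivial ℤ G A) _).trans ⟨?_, ?_⟩
  · rintro ⟨u, hu⟩
    refine ⟨(u : G → A), ?_⟩
    ext g h
    have := congrFun hu (g, h)
    rw [d₁₂_hom_apply] at this
    change (u h - u (g * h) + u g : A) = f g h at this
    change (u g + u h - u (g * h) : A) = f g h
    rw [← this]
    abel
  · rintro ⟨u, rfl⟩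
    refine ⟨(u : G → A), ?_⟩
    ext g
    rw [d₁₂_hom_apply]
    change u g.2 - u (g.1 * g.2) + u g.1 = u g.1 + u g.2 - u (g.1 * g.2)
    abel

theorem natCard_groupCohomology_two :
    Nat.card (groupCohomology (Rep.trivial ℤ G A) 2) = (twoCoboundaries G A).index := by
  rw [← twoCocycles.ker_toH2, AddSubgroup.index_ker,
    AddMonoidHom.range_eq_top.2 twoCocycles.toH2_surjective]
  exact (Nat.card_congr AddSubgroup.topEquiv.toEquiv).symm

end GroupCohomology

section ComplexUnits

theorem exists_nsmul_eq_units {n : ℕ} (hn : n ≠ 0) (a : Additive ℂˣ) : ∃ b, n • b = a := by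
  obtain ⟨z, hz⟩ := IsAlgClosed.exists_pow_nat_eq (a.toMul : ℂ) (Nat.pos_of_ne_zero hn)
  have z_ne : z ≠ 0 := ne_zero_pow hn (hz ▸ a.toMul.ne_zero)
  exact ⟨.ofMul (Units.mk0 z z_ne), congrArg Additive.ofMul (Units.ext hz)⟩

noncomputable instance : DivisibleBy (Additive ℂˣ) ℕ :=
  divisibleByOfSMulRightSurj _ _ fun hn a => exists_nsmul_eq_units hn a

noncomputable instance : DivisibleBy (Additive ℂˣ) ℤ :=
  AddGroup.divisibleByIntOfDivisibleByNat _

theorem exists_zmod_embedding (p : ℕ) [NeZero p] : ∃ ι : ZMod p →+ Additive ℂˣ,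
    Function.Injective ι ∧ ∀ a, p • a = 0 → a ∈ ι.range := by
  have hζ := (Complex.isPrimitiveRoot_exp p (NeZero.ne p)).isUnit_unit (NeZero.ne p)
  refine ⟨(Subgroup.zpowers _).subtype.toAdditive.comp hζ.zmodEquivZPowers.toAddMonoidHom,
    Subtype.val_injective.comp hζ.zmodEquivZPowers.injective, fun a ha => ?_⟩
  have mem : a.toMul ∈ Subgroup.zpowers _ := hζ.zpowers_eq ▸ (mem_rootsOfUnity p _).2 ha
  obtain ⟨k, hk⟩ := hζ.zmodEquivZPowers.surjective (.ofMul ⟨_, mem⟩)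
  exact ⟨k, congrArg (fun b => Additive.ofMul (b.toMul : ℂˣ)) hk⟩

end ComplexUnits

section SpecialGroups

open Module Subgroup
open scoped commutatorElement IsMulCommutative

theorem eq_one_of_mem_zpowers_pow {p : ℕ} [Fact p.Prime] {G : Type*} [Group G]
    (hG : IsPGroup p G) {g : G} (hg : g ∈ zpowers (g ^ p)) : g = 1 := by
  obtain ⟨n, hn⟩ := IsPGroup.iff_orderOf.1 hG g
  have coprime := mem_zpowers_pow_iff.1 hg
  rcases n.eq_zero_or_pos with rfl | n_pos
  · simpa using hn
  · rw [hn, Nat.gcd_eq_left (dvd_pow_self p n_pos.ne')] at coprime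
    exact absurd coprime (Nat.Prime.one_lt Fact.out).ne'

theorem pow_mem_frattini {p : ℕ} [Fact p.Prime] {G : Type*} [Group G] [Finite G]
    (hG : IsPGroup p G) (g : G) : g ^ p ∈ frattini G := by
  simp only [frattini, Order.radical, mem_iInf]
  intro M (hM : IsCoatom M)
  have : Group.IsNilpotent G := hG.isNilpotent
  have : M.Normal :=
    ((Group.isNilpotent_of_finite_tfae (G := G)).out 0 2 rfl rfl).1 inferInstance M hM
  rcases hM.le_iff.1 (QuotientGroup.le_comap_mk' M (zpowers ((g : G ⧸ M) ^ p))) with h | h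
  · have mem : (g : G ⧸ M) ∈ zpowers ((g : G ⧸ M) ^ p) := h.ge (mem_top g)
    exact pow_mem ((QuotientGroup.eq_one_iff g).1
      (eq_one_of_mem_zpowers_pow (hG.to_quotient M) mem)) p
  · exact h.le (mem_zpowers _)

variable {G : Type*} [Group G]

theorem eq_top_of_commutatorForm_mem (hZ : center G = _root_.commutator G)
    {S : AddSubgroup (Additive (center G))} (hS : ∀ x y, commutatorForm hZ.ge x y ∈ S) :
    S = ⊤ := by
  have le_map : _root_.commutator G ≤ (AddSubgroup.toSubgroup' S).map (center G).subtype :=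
    commutator_le.2 fun g _ h _ => ⟨_, hS (.ofMul (.of g)) (.ofMul (.of h)), rfl⟩
  refine eq_top_iff.2 fun z _ => ?_
  obtain ⟨w, hw, hwz⟩ := le_map (hZ.le z.toMul.2)
  obtain rfl : w = z.toMul := Subtype.ext hwz
  exact hw

theorem nsmul_abelianization_eq_zero {n : ℕ} (hn : ∀ g : G, g ^ n ∈ _root_.commutator G)
    (x : Additive (Abelianization G)) : n • x = 0 := by
  obtain ⟨g, rfl⟩ := ofMul_of_surjective x
  rw [← ofMul_pow, ← map_pow, ofMul_eq_zero, ← MonoidHom.mem_ker, Abelianization.ker_of]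
  exact hn g

theorem nsmul_center_eq_zero (hZ : center G = _root_.commutator G) {n : ℕ}
    (hn : ∀ x : Additive (Abelianization G), n • x = 0) (z : Additive (center G)) :
    n • z = 0 := by
  have ker_eq_top : (nsmulAddMonoidHom (α := Additive (center G)) n).ker = ⊤ :=
    eq_top_of_commutatorForm_mem hZ fun x y => by
      rw [AddMonoidHom.mem_ker, nsmulAddMonoidHom_apply, ← map_nsmul, hn, map_zero]
  exact ker_eq_top.ge (AddSubgroup.mem_top z)

theorem finrank_additive_le_rank (p : ℕ) [Fact p.Prime] (Q : Type*) [CommGroup Q] [Group.FG Q]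
    [Module (ZMod p) (Additive Q)] : finrank (ZMod p) (Additive Q) ≤ Group.rank Q := by
  obtain ⟨S, hS, hcl⟩ := Group.rank_spec Q
  let T : Finset (Additive Q) := S.map Additive.ofMul.toEmbedding
  have closure_le_span : Subgroup.closure (S : Set Q) ≤
      AddSubgroup.toSubgroup' (Submodule.span (ZMod p) (T : Set (Additive Q))).toAddSubgroup :=
    (Subgroup.closure_le _).2 fun y hy =>
      Submodule.subset_span (s := (T : Set (Additive Q))) (Finset.mem_map_of_mem _ hy)
  have span_eq_top : Submodule.span (ZMod p) (T : Set (Additive Q)) = ⊤ :=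
    eq_top_iff.2 fun x _ => closure_le_span (hcl.ge (mem_top x.toMul))
  have finrank_le := finrank_span_finset_le_card (R := ZMod p) T
  rwa [Set.finrank, span_eq_top, finrank_top, Finset.card_map, hS] at finrank_le

theorem finrank_abelianization_le_rank (p : ℕ) [Fact p.Prime] (G : Type*) [Group G] [Group.FG G]
    [Module (ZMod p) (Additive (Abelianization G))] :
    finrank (ZMod p) (Additive (Abelianization G)) ≤ Group.rank G :=
  have : Group.FG (Abelianization G) := QuotientGroup.fg _
  (finrank_additive_le_rank p _).trans
    (Group.rank_le_of_surjective Abelianization.of QuotientGroup.mk_surjective)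

variable {p : ℕ} [Fact p.Prime]
  [Module (ZMod p) (Additive (Abelianization G))] [Module (ZMod p) (Additive (center G))]
  {B : Additive (Abelianization G) →ₗ[ZMod p] Additive (Abelianization G) →ₗ[ZMod p]
    Additive (center G)}

theorem iSup_range_commutatorForm_eq_top (hZ : center G = _root_.commutator G)
    (hB : ∀ x y, B x y = commutatorForm hZ.ge x y) : ⨆ x, LinearMap.range (B x) = ⊤ := by
  refine Submodule.toAddSubgroup_injective <| eq_top_of_commutatorForm_mem hZ fun x y => ?_
  rw [← hB]
  exact le_iSup (fun x => LinearMap.range (B x)) x ⟨y, rfl⟩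

theorem radicalModulo_commutatorForm_eq_bot (hZ : center G = _root_.commutator G)
    (hB : ∀ x y, B x y = commutatorForm hZ.ge x y) : radicalModulo B ⊥ = ⊥ := by
  refine (Submodule.eq_bot_iff _).2 fun x hx => ?_
  obtain ⟨g, rfl⟩ := ofMul_of_surjective x
  have central : g ∈ center G := mem_center_iff.2 fun h => by
    have comm_eq_zero := mem_radicalModulo.1 hx (.ofMul (.of h))
    rw [Submodule.mem_bot, hB, commutatorForm_of, ofMul_eq_zero] at comm_eq_zero
    exact (commutatorElement_eq_one_iff_mul_comm.1 (congrArg Subtype.val comm_eq_zero)).symm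
  rw [ofMul_eq_zero, ← MonoidHom.mem_ker, Abelianization.ker_of, ← hZ]
  exact central

omit [Module (ZMod p) (Additive (Abelianization G))] [Module (ZMod p) (Additive (center G))] in
theorem pow_le_card_abelianization {a b : ℕ} (hb : Nat.card (_root_.commutator G) = p ^ b)
    (hab : p ^ (a + b) ≤ Nat.card G) : p ^ a ≤ Nat.card (Additive (Abelianization G)) := by
  rw [card_eq_card_quotient_mul_card_subgroup (_root_.commutator G), hb, pow_add] at hab
  exact Nat.le_of_mul_le_mul_right hab (pow_pos (Nat.Prime.pos Fact.out) b)

end SpecialGroups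

section SchurMultiplier

open Module Subgroup
open scoped IsMulCommutative

variable {p : ℕ} [Fact p.Prime] {G : Type} [Group G] [Finite G]

theorem natCard_schurMultiplier_le_of_module [Module (ZMod p) (Additive (Abelianization G))]
    [Module (ZMod p) (Additive (center G))] (hZ : center G = _root_.commutator G)
    (hcenter : Nat.card (center G) = p ^ 3) (hcard : p ^ 13 ≤ Nat.card G) :
    Nat.card (schurMultiplier G) ≤ p ^ ((Group.rank G).choose 2 + 2) := by
  have hp : p.Prime := Fact.out
  have : FiniteDimensional (ZMod p) (Additive (Abelianization G)) := Module.Finite.of_finite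
  have : FiniteDimensional (ZMod p) (Additive (center G)) := Module.Finite.of_finite
  obtain ⟨B, hB⟩ := exists_linearMap₂_lift (p := p) (ι := AddMonoidHom.id _)
    Function.injective_id (fun z _ => ⟨z, rfl⟩) (commutatorForm hZ.ge)
  have hB_alt : B.IsAlt := fun x => (hB x x).trans (commutatorForm_self hZ.ge x)
  have hspan := iSup_range_commutatorForm_eq_top hZ hB
  have finrank_center : finrank (ZMod p) (Additive (center G)) = 3 := by
    rw [← Nat.pow_right_inj hp.two_le, ← hcenter]
    exact natCard_eq_pow_finrank_zmod.symm
  have le_finrank : 10 ≤ finrank (ZMod p) (Additive (Abelianization G)) :=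
    (Nat.pow_le_pow_iff_right hp.one_lt).1 <|
      (pow_le_card_abelianization (hZ ▸ hcenter) hcard).trans natCard_eq_pow_finrank_zmod.le
  obtain ⟨ι, hι, hιp⟩ := exists_zmod_embedding p
  rw [schurMultiplier, natCard_groupCohomology_two]
  refine Nat.le_of_mul_le_mul_right (c := p ^ 3) ?_ (pow_pos hp.pos 3)
  calc
    _ = _ := by rw [finrank_center]
    _ ≤ _ := index_twoCoboundaries_mul_pow_le hι hιp hZ.ge hB hZ hspan
    _ ≤ p ^ ((Group.rank G).choose 2 + 5) := Nat.pow_le_pow_right hp.pos <| Nat.add_le_add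
      (Nat.choose_le_choose 2 (finrank_abelianization_le_rank p G))
      (finrank_jacobiPairings_le_five hB_alt (radicalModulo_commutatorForm_eq_bot hZ hB) hspan
        finrank_center le_finrank)
    _ = _ := by rw [← pow_add]

theorem natCard_schurMultiplier_le (hZ : center G = _root_.commutator G)
    (hpow : ∀ g : G, g ^ p ∈ _root_.commutator G) (hcenter : Nat.card (center G) = p ^ 3)
    (hcard : p ^ 13 ≤ Nat.card G) :
    Nat.card (schurMultiplier G) ≤ p ^ ((Group.rank G).choose 2 + 2) :=
  let _ := AddCommGroup.zmodModule (nsmul_abelianization_eq_zero hpow)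
  let _ := AddCommGroup.zmodModule (nsmul_center_eq_zero hZ (nsmul_abelianization_eq_zero hpow))
  natCard_schurMultiplier_le_of_module hZ hcenter hcard

end SchurMultiplier

theorem schur_multiplier_bound_special_center_p_cube_large_general (p d : ℕ) (hp : p.Prime)
    (G : Type) [Group G] [Finite G] (hpG : IsPGroup p G)
    (hzc : Subgroup.center G = commutator G) (hzf : Subgroup.center G = frattini G)
    (hz : Nat.card (Subgroup.center G) = p ^ 3) (hbig : p ^ 13 ≤ Nat.card G)
    (hd : Group.rank G = d) :
    (Nat.card (schurMultiplier G) : ℝ) ≤ (p : ℝ) ^ ((d : ℝ) * ((d : ℝ) - 1) / 2 + 2) := by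
  have : Fact p.Prime := ⟨hp⟩
  have hpow (g : G) : g ^ p ∈ commutator G := hzc ▸ hzf ▸ pow_mem_frattini hpG g
  calc
    _ ≤ (p : ℝ) ^ (d.choose 2 + 2) := by
      exact_mod_cast hd ▸ natCard_schurMultiplier_le hzc hpow hz hbig
    _ = _ := by rw [← Real.rpow_natCast, Nat.cast_add, Nat.cast_choose_two, Nat.cast_two]

/-- Corollary 3, first part: if `p` is odd and `G₂` is a special `p`-group with
center of order `p ^ 3` and `|G₂| ≥ p ^ 13`, then `|M(G₂)| ≤ p ^ (d * (d - 1) / 2 + 2)`. -/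
theorem schur_multiplier_bound_special_center_p_cube_large (p d : ℕ) (hp : p.Prime)
    (hodd : p ≠ 2)
    (G : Type) [Group G] [Finite G] [Group.IsNilpotent G]
    (hpG : IsPGroup p G)
    (hc : Group.nilpotencyClass G = 2)
    (hzc : Subgroup.center G = commutator G)
    (hzf : Subgroup.center G = frattini G)
    (hz : Nat.card (Subgroup.center G) = p ^ 3)
    (hbig : p ^ 13 ≤ Nat.card G)
    (hd : Group.rank G = d) :
    (Nat.card (schurMultiplier G) : ℝ) ≤ (p : ℝ) ^ ((d : ℝ) * ((d : ℝ) - 1) / 2 + 2) :=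
  schur_multiplier_bound_special_center_p_cube_large_general p d hp G hpG hzc hzf hz hbig hd
end
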